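/- For every integer s ≥ 2 there are constants β > 0 and C > 0 such that the following holds. Let g ≤ βn and let G be an n-vertex graph with minimum degree at least g. Then for p = C·p_s(n), with high probability (as n → ∞) the graph G^p = G ∪ G_{n,p} contains a collection of g pairwise vertex-disjoint copies of the complete graph K_{s+1}. -/

import Mathlib

open Finset
open scoped Classical

/-- The degree of a vertex (number of neighbours). -/
noncomputable def degR {V : Type*} (G : SimpleGraph V) (v : V) : ℕ :=
  Nat.card (G.neighborSet v)

/-- The number of edges of a graph on `Fin n`. -/
noncomputable def edgeCount {n : ℕ} (H : SimpleGraph (Fin n)) : ℕ := Nat.card H.edgeSet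

/-- The probability that the binomial random graph `G_{n,p}` satisfies the property `P`. -/
noncomputable def Pr (n : ℕ) (p : ℝ) (P : SimpleGraph (Fin n) → Prop) : ℝ :=
  ∑ H : SimpleGraph (Fin n),
    if P H then p ^ edgeCount H * (1 - p) ^ (n.choose 2 - edgeCount H) else 0

/-- `G` has a `K_r`-factor: a partition of the vertex set into `r`-cliques. -/
def HasCliqueFactor {n : ℕ} (G : SimpleGraph (Fin n)) (r : ℕ) : Prop :=
  ∃ P : Finpartition (Finset.univ : Finset (Fin n)), ∀ c ∈ P.parts, G.IsNClique r c

/-- The threshold function `p_s(n)`: `log n / n` if `s = 2` and `n^{-φ(s)}` with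
`φ(s) = 2s/((s-1)(s+2))` if `s ≥ 3`. -/
noncomputable def pThr (s n : ℕ) : ℝ :=
  if s = 2 then Real.log n / n
  else (n : ℝ) ^ (-(2 * (s : ℝ)) / (((s : ℝ) - 1) * ((s : ℝ) + 2)))

/-- The number of edges of `G` within the vertex set `S`. -/
noncomputable def edgesIn {V : Type*} (G : SimpleGraph V) (S : Set V) : ℕ :=
  Nat.card {e : Sym2 V // e ∈ G.edgeSet ∧ ∀ v ∈ e, v ∈ S}

/-- The number of ordered adjacent pairs between `S` and `T`. -/
noncomputable def edgesBtw {V : Type*} (G : SimpleGraph V) (S T : Set V) : ℕ :=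
  Nat.card {p : V × V // p.1 ∈ S ∧ p.2 ∈ T ∧ G.Adj p.1 p.2}

/-- The edge density of the pair `(S, T)` in `G`. -/
noncomputable def density {V : Type*} (G : SimpleGraph V) (S T : Set V) : ℝ :=
  (edgesBtw G S T : ℝ) / ((S.ncard : ℝ) * (T.ncard : ℝ))

/-- The pair `(S, T)` is `(ε, d)`-regular in `G`. -/
def IsRegularPair {V : Type*} (G : SimpleGraph V) (S T : Set V) (ε d : ℝ) : Prop :=
  ∀ X ⊆ S, ∀ Y ⊆ T, ε * S.ncard ≤ (X.ncard : ℝ) → ε * T.ncard ≤ (Y.ncard : ℝ) →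
    |density G X Y - d| < ε

/-- The pair `(S, T)` is `(ε, d, ϑ)`-super-regular in `G`. -/
def IsSuperRegularPair {V : Type*} (G : SimpleGraph V) (S T : Set V) (ε d ϑ : ℝ) : Prop :=
  IsRegularPair G S T ε d ∧
  (∀ v ∈ S, ϑ * T.ncard ≤ ((T ∩ G.neighborSet v).ncard : ℝ)) ∧
  (∀ v ∈ T, ϑ * S.ncard ≤ ((S ∩ G.neighborSet v).ncard : ℝ))

set_option linter.unusedSectionVars false

section Prob
variable {α : Type*} [DecidableEq α]

/-- Expectation of `f` with respect to the `p`-random subset of `A`. -/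
noncomputable def bex (p : ℝ) (A : Finset α) (f : Finset α → ℝ) : ℝ :=
  ∑ S ∈ A.powerset, p ^ #S * (1 - p) ^ (#A - #S) * f S

lemma bex_empty (p : ℝ) (f : Finset α → ℝ) : bex p ∅ f = f ∅ := by
  simp [bex]

lemma bex_insert (p : ℝ) {A : Finset α} {a : α} (ha : a ∉ A) (f : Finset α → ℝ) :
    bex p (insert a A) f = (1 - p) * bex p A f + p * bex p A (fun S => f (insert a S)) := by
  unfold bex
  rw [Finset.sum_powerset_insert ha, Finset.mul_sum, Finset.mul_sum]
  congr 1
  · apply Finset.sum_congr rfl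
    intro S hS
    have h1 := Finset.card_le_card (Finset.mem_powerset.1 hS)
    rw [Finset.card_insert_of_notMem ha, show #A + 1 - #S = (#A - #S) + 1 by omega]
    ring
  · apply Finset.sum_congr rfl
    intro S hS
    have h2 : a ∉ S := fun h => ha (Finset.mem_powerset.1 hS h)
    rw [Finset.card_insert_of_notMem ha, Finset.card_insert_of_notMem h2,
      show #A + 1 - (#S + 1) = (#A - #S) by omega]
    ring

lemma bex_peel (p : ℝ) {A : Finset α} {a : α} (ha : a ∈ A) (f : Finset α → ℝ) :
    bex p A f = (1 - p) * bex p (A.erase a) f + p * bex p (A.erase a) (fun S => f (insert a S)) := by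
  conv_lhs => rw [← Finset.insert_erase ha]
  exact bex_insert p (Finset.notMem_erase a A) f

lemma bex_congr (p : ℝ) {A : Finset α} {f g : Finset α → ℝ} (h : ∀ S ⊆ A, f S = g S) :
    bex p A f = bex p A g := by
  apply Finset.sum_congr rfl
  intro S hS
  rw [h S (Finset.mem_powerset.1 hS)]

lemma bex_mono {p : ℝ} (h0 : 0 ≤ p) (h1 : p ≤ 1) {A : Finset α} {f g : Finset α → ℝ}
    (h : ∀ S ⊆ A, f S ≤ g S) : bex p A f ≤ bex p A g := by
  apply Finset.sum_le_sum
  intro S hS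
  have : 0 ≤ 1 - p := by linarith
  exact mul_le_mul_of_nonneg_left (h S (Finset.mem_powerset.1 hS)) (by positivity)

lemma bex_add (p : ℝ) (A : Finset α) (f g : Finset α → ℝ) :
    bex p A (fun S => f S + g S) = bex p A f + bex p A g := by
  simp [bex, mul_add, Finset.sum_add_distrib]

lemma bex_sub (p : ℝ) (A : Finset α) (f g : Finset α → ℝ) :
    bex p A (fun S => f S - g S) = bex p A f - bex p A g := by
  simp [bex, mul_sub, Finset.sum_sub_distrib]

lemma bex_smul (p : ℝ) (A : Finset α) (c : ℝ) (f : Finset α → ℝ) :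
    bex p A (fun S => c * f S) = c * bex p A f := by
  simp only [bex, Finset.mul_sum]
  apply Finset.sum_congr rfl
  intro S _
  ring

lemma bex_sum (p : ℝ) (A : Finset α) {ι : Type*} (I : Finset ι) (f : ι → Finset α → ℝ) :
    bex p A (fun S => ∑ i ∈ I, f i S) = ∑ i ∈ I, bex p A (f i) := by
  simp only [bex, Finset.mul_sum]
  rw [Finset.sum_comm]

lemma bex_const (p : ℝ) (A : Finset α) (c : ℝ) : bex p A (fun _ => c) = c := by
  induction A using Finset.induction_on with
  | empty => simp [bex_empty]
  | insert a A ha ih => rw [bex_insert p ha, ih]; ring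

lemma bex_nonneg {p : ℝ} (h0 : 0 ≤ p) (h1 : p ≤ 1) {A : Finset α} {f : Finset α → ℝ}
    (h : ∀ S ⊆ A, 0 ≤ f S) : 0 ≤ bex p A f := by
  rw [← bex_const p A 0]
  exact bex_mono h0 h1 h

lemma bex_ind (p : ℝ) {A : Finset α} {a : α} (ha : a ∈ A) {g : Finset α → ℝ}
    (hg : ∀ S, g (insert a S) = g S) :
    bex p A (fun S => if a ∈ S then g S else 0) = p * bex p A g := by
  rw [bex_peel p ha, bex_peel p ha g]
  have e1 : bex p (A.erase a) (fun S => if a ∈ S then g S else 0) = 0 := by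
    refine (bex_congr p (g := fun _ => 0) ?_).trans (bex_const p (A.erase a) 0)
    intro S hS
    rw [if_neg]
    intro h
    exact Finset.notMem_erase a A (hS h)
  rw [e1]
  simp only [Finset.mem_insert_self, if_true, hg]
  ring

lemma bex_subset (p : ℝ) {A R : Finset α} (hR : R ⊆ A) {g : Finset α → ℝ}
    (hg : ∀ a ∈ R, ∀ S, g (insert a S) = g S) :
    bex p A (fun S => if R ⊆ S then g S else 0) = p ^ #R * bex p A g := by
  induction R using Finset.induction_on with
  | empty => simp
  | insert a R ha ih =>
    have hR' : R ⊆ A := fun x hx => hR (Finset.mem_insert_of_mem hx)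
    have := ih hR' (fun b hb => hg b (Finset.mem_insert_of_mem hb))
    rw [Finset.card_insert_of_notMem ha, pow_succ', mul_assoc, ← this,
      ← bex_ind p (hR (Finset.mem_insert_self a R))]
    · apply bex_congr
      intro S _
      simp only [Finset.insert_subset_iff]
      by_cases h1 : a ∈ S <;> by_cases h2 : R ⊆ S <;> simp [h1, h2]
    · intro S
      have : R ⊆ insert a S ↔ R ⊆ S := by
        rw [Finset.subset_insert_iff, Finset.erase_eq_of_notMem ha]
      simp only [this, hg a (Finset.mem_insert_self a R)]

lemma bex_prob (p : ℝ) {A R : Finset α} (hR : R ⊆ A) :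
    bex p A (fun S => if R ⊆ S then 1 else 0) = p ^ #R := by
  have := bex_subset p hR (g := fun _ => 1) (by simp)
  simpa [bex_const] using this

lemma harris {p : ℝ} (h0 : 0 ≤ p) (h1 : p ≤ 1) (A : Finset α) (f g : Finset α → ℝ)
    (hf : Monotone f) (hg : Antitone g) :
    bex p A (fun S => f S * g S) ≤ bex p A f * bex p A g := by
  induction A using Finset.induction_on generalizing f g with
  | empty => simp [bex_empty]
  | insert a A ha ih =>
    rw [bex_insert p ha, bex_insert p ha f, bex_insert p ha g]
    have i0 := ih f g hf hg
    have i1 := ih (fun S => f (insert a S)) (fun S => g (insert a S))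
      (fun S T h => hf (Finset.insert_subset_insert a h))
      (fun S T h => hg (Finset.insert_subset_insert a h))
    have m1 : bex p A f ≤ bex p A (fun S => f (insert a S)) :=
      bex_mono h0 h1 (fun S _ => hf (Finset.subset_insert a S))
    have m2 : bex p A (fun S => g (insert a S)) ≤ bex p A g :=
      bex_mono h0 h1 (fun S _ => hg (Finset.subset_insert a S))
    have q : 0 ≤ 1 - p := by linarith
    have k0 := mul_le_mul_of_nonneg_left i0 q
    have k1 := mul_le_mul_of_nonneg_left i1 h0
    have k2 := mul_nonneg (mul_nonneg h0 q) (mul_nonneg (sub_nonneg.2 m1) (sub_nonneg.2 m2))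
    nlinarith

lemma bex_mono_p {p q : ℝ} (hq0 : 0 ≤ q) (hqp : q ≤ p) (h1 : p ≤ 1) (A : Finset α)
    (f : Finset α → ℝ) (hf : Monotone f) : bex q A f ≤ bex p A f := by
  induction A using Finset.induction_on generalizing f with
  | empty => simp [bex_empty]
  | insert a A ha ih =>
    rw [bex_insert p ha, bex_insert q ha f]
    have i0 := ih f hf
    have i1 := ih (fun S => f (insert a S)) (fun S T h => hf (Finset.insert_subset_insert a h))
    have m1 : bex p A f ≤ bex p A (fun S => f (insert a S)) :=
      bex_mono (hq0.trans hqp) h1 (fun S _ => hf (Finset.subset_insert a S))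
    nlinarith [mul_nonneg (sub_nonneg.2 hqp) (sub_nonneg.2 m1),
      mul_nonneg (show 0 ≤ 1 - q by linarith) (sub_nonneg.2 i0), mul_nonneg hq0 (sub_nonneg.2 i1)]

lemma sq_bex_le {p : ℝ} (h0 : 0 ≤ p) (h1 : p ≤ 1) (A : Finset α) (f : Finset α → ℝ) :
    (bex p A f) ^ 2 ≤ bex p A (fun S => f S ^ 2) := by
  have h := bex_nonneg (p := p) h0 h1 (A := A) (f := fun S => (f S - bex p A f) ^ 2)
    (fun S _ => sq_nonneg _)
  have e : bex p A (fun S => (f S - bex p A f) ^ 2)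
      = bex p A (fun S => f S ^ 2) - (bex p A f) ^ 2 := by
    have : (fun S => (f S - bex p A f) ^ 2)
        = fun S => (f S ^ 2 - (2 * bex p A f) * f S) + (bex p A f) ^ 2 := by
      funext S; ring
    rw [this, bex_add, bex_sub, bex_smul, bex_const]
    ring
  linarith

lemma poincare {p : ℝ} (h0 : 0 ≤ p) (h1 : p ≤ 1) (A : Finset α) (f : Finset α → ℝ) :
    bex p A (fun S => f S ^ 2) - (bex p A f) ^ 2 ≤
      p * ∑ a ∈ A, bex p A (fun S => (f (insert a S) - f (S.erase a)) ^ 2) := by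
  induction A using Finset.induction_on generalizing f with
  | empty => simp [bex_empty]
  | insert a A ha ih =>
    rw [Finset.sum_insert ha]
    have i0 := ih f
    have i1 := ih (fun S => f (insert a S))
    have e1 : bex p (insert a A) (fun S => (f (insert a S) - f (S.erase a)) ^ 2)
        = bex p A (fun S => (f (insert a S) - f S) ^ 2) := by
      rw [bex_insert p ha]
      have x1 : bex p A (fun S => (f (insert a S) - f (S.erase a)) ^ 2) =
          bex p A (fun S => (f (insert a S) - f S) ^ 2) := by
        apply bex_congr
        intro S hS
        rw [Finset.erase_eq_of_notMem (fun h => ha (hS h))]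
      have x2 : bex p A (fun S => (f (insert a (insert a S)) - f ((insert a S).erase a)) ^ 2) =
          bex p A (fun S => (f (insert a S) - f S) ^ 2) := by
        apply bex_congr
        intro S hS
        rw [Finset.erase_insert (fun h => ha (hS h)), Finset.insert_idem]
      rw [x1, x2]
      ring
    have e2 : ∑ b ∈ A, bex p (insert a A) (fun S => (f (insert b S) - f (S.erase b)) ^ 2)
        = (1 - p) * ∑ b ∈ A, bex p A (fun S => (f (insert b S) - f (S.erase b)) ^ 2)
        + p * ∑ b ∈ A, bex p A
          (fun S => (f (insert a (insert b S)) - f (insert a (S.erase b))) ^ 2) := by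
      rw [Finset.mul_sum, Finset.mul_sum, ← Finset.sum_add_distrib]
      apply Finset.sum_congr rfl
      intro b hb
      have hab : b ≠ a := fun h => ha (h ▸ hb)
      rw [bex_insert p ha]
      simp only [Finset.insert_comm b a, Finset.erase_insert_of_ne hab.symm]
    rw [e1, e2, bex_insert p ha, bex_insert p ha f]
    have j := sq_bex_le h0 h1 A (fun S => f (insert a S) - f S)
    rw [bex_sub] at j
    have q : 0 ≤ 1 - p := by linarith
    have k0 := mul_le_mul_of_nonneg_left i0 q
    have k1 := mul_le_mul_of_nonneg_left i1 h0
    have k2 := mul_le_mul_of_nonneg_left j (mul_nonneg h0 q)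
    have k3 : p * (1 - p) * bex p A (fun S => (f (insert a S) - f S) ^ 2) ≤
      p * bex p A (fun S => (f (insert a S) - f S) ^ 2) := by
      have := bex_nonneg (p := p) h0 h1 (A := A) (f := fun S => (f (insert a S) - f S) ^ 2)
        (fun S _ => sq_nonneg _)
      nlinarith [mul_nonneg (mul_nonneg h0 h0) this]
    nlinarith

/-- A simple form of the Janson inequality. -/
lemma janson {p : ℝ} (h0 : 0 ≤ p) (h1 : p ≤ 1) {ι : Type*} [DecidableEq ι] (A : Finset α)
    (R : ι → Finset α) (I : Finset ι) (hR : ∀ i ∈ I, R i ⊆ A)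
    (hΔ : ∀ i ∈ I, ∑ j ∈ I with j ≠ i ∧ ¬ Disjoint (R i) (R j), p ^ #(R i ∪ R j)
      ≤ p ^ #(R i) / 2) :
    bex p A (fun S => if ∀ i ∈ I, ¬ R i ⊆ S then 1 else 0) ≤
      Real.exp (-(∑ i ∈ I, p ^ #(R i)) / 2) := by
  induction I using Finset.induction_on with
  | empty => simp [bex_const]
  | insert i I hi ih =>
    have ih' := ih (fun j hj => hR j (Finset.mem_insert_of_mem hj)) (by
      intro j hj
      refine le_trans ?_ (hΔ j (Finset.mem_insert_of_mem hj))
      apply Finset.sum_le_sum_of_subset_of_nonneg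
      · exact Finset.filter_subset_filter _ (Finset.subset_insert _ _)
      · intros; positivity)
    have hΔi := hΔ i (Finset.mem_insert_self i I)
    have hRi := hR i (Finset.mem_insert_self i I)
    set I0 := I.filter (fun j => Disjoint (R i) (R j)) with hI0
    set I1 := I.filter (fun j => ¬ Disjoint (R i) (R j)) with hI1
    have hI1e : (insert i I).filter (fun j => j ≠ i ∧ ¬ Disjoint (R i) (R j)) = I1 := by
      ext j
      simp only [hI1, Finset.mem_filter, Finset.mem_insert]
      constructor
      · rintro ⟨h | h, h2, h3⟩
        · exact absurd h h2
        · exact ⟨h, h3⟩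
      · rintro ⟨h, h3⟩
        exact ⟨Or.inr h, fun h' => hi (h' ▸ h), h3⟩
    rw [hI1e] at hΔi
    let n0 : Finset α → ℝ := fun S => if ∀ j ∈ I0, ¬ R j ⊆ S then 1 else 0
    let nI : Finset α → ℝ := fun S => if ∀ j ∈ I, ¬ R j ⊆ S then 1 else 0
    have hn0 : Antitone n0 := by
      intro S T h
      simp only [n0]
      split_ifs with a b
      · exact le_rfl
      · exact absurd (fun j hj hh => a j hj (hh.trans h)) b
      · norm_num
      · exact le_rfl
    have hmono : ∀ Q : Finset α, Monotone (fun S => if Q ⊆ S then (1:ℝ) else 0) := by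
      intro Q S T h
      simp only
      split_ifs with a b
      · exact le_rfl
      · exact absurd (a.trans h) b
      · norm_num
      · exact le_rfl
    have key : ∀ S, (if ∀ j ∈ insert i I, ¬ R j ⊆ S then (1:ℝ) else 0) ≤
        nI S - (if R i ⊆ S then n0 S else 0)
          + ∑ j ∈ I1, (if R i ∪ R j ⊆ S then (1:ℝ) else 0) * n0 S := by
      intro S
      have hs : 0 ≤ ∑ j ∈ I1, (if R i ∪ R j ⊆ S then (1:ℝ) else 0) * n0 S := by
        apply Finset.sum_nonneg
        intro j _
        simp only [n0]
        split_ifs <;> norm_num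
      by_cases hA : ∀ j ∈ I, ¬ R j ⊆ S
      · have hA0 : ∀ j ∈ I0, ¬ R j ⊆ S := fun j hj => hA j (Finset.mem_filter.1 hj).1
        by_cases hB : R i ⊆ S
        · have : ¬ ∀ j ∈ insert i I, ¬ R j ⊆ S := fun h => h i (Finset.mem_insert_self _ _) hB
          rw [if_neg this, if_pos hB]
          simp only [nI, n0, if_pos hA, if_pos hA0] at hs ⊢
          linarith
        · rw [if_neg hB]
          simp only [nI, if_pos hA]
          split_ifs <;> linarith
      · have : ¬ ∀ j ∈ insert i I, ¬ R j ⊆ S :=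
          fun h => hA (fun j hj => h j (Finset.mem_insert_of_mem hj))
        rw [if_neg this]
        simp only [nI, if_neg hA]
        by_cases hB : R i ⊆ S
        · rw [if_pos hB]
          by_cases hA0 : ∀ j ∈ I0, ¬ R j ⊆ S
          · push Not at hA
            obtain ⟨j, hj, hjS⟩ := hA
            have hj1 : j ∈ I1 := by
              rw [hI1, Finset.mem_filter]
              refine ⟨hj, fun hd => hA0 j ?_ hjS⟩
              rw [hI0, Finset.mem_filter]
              exact ⟨hj, hd⟩
            have hle := Finset.single_le_sum
              (f := fun j => (if R i ∪ R j ⊆ S then (1:ℝ) else 0) * n0 S) (s := I1)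
              (by
                intro j _
                simp only [n0]
                split_ifs <;> norm_num) hj1
            have hn : n0 S = 1 := by simp only [n0, if_pos hA0]
            simp only [if_pos (Finset.union_subset hB hjS), hn] at hle ⊢
            linarith
          · have hn : n0 S = 0 := by simp only [n0, if_neg hA0]
            rw [hn]; simp
        · rw [if_neg hB]; linarith
    have b1 := bex_mono (A := A) h0 h1 (fun S _ => key S)
    rw [bex_add, bex_sub, bex_sum] at b1
    have b2 : bex p A (fun S => if R i ⊆ S then n0 S else 0) = p ^ #(R i) * bex p A n0 := by
      apply bex_subset p hRi
      intro a ha S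
      simp only [n0]
      have : (∀ j ∈ I0, ¬ R j ⊆ insert a S) ↔ (∀ j ∈ I0, ¬ R j ⊆ S) := by
        refine forall₂_congr (fun j hj => ?_)
        have hd : Disjoint (R i) (R j) := (Finset.mem_filter.1 hj).2
        rw [Finset.subset_insert_iff, Finset.erase_eq_of_notMem (Finset.disjoint_left.1 hd ha)]
      simp only [this]
    have b3 : ∀ j ∈ I1, bex p A (fun S => (if R i ∪ R j ⊆ S then (1:ℝ) else 0) * n0 S) ≤
        p ^ #(R i ∪ R j) * bex p A n0 := by
      intro j hj
      refine (harris h0 h1 A _ n0 (hmono _) hn0).trans ?_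
      rw [bex_prob p (Finset.union_subset hRi
        (hR j (Finset.mem_insert_of_mem (Finset.mem_filter.1 hj).1)))]
    have b4 := Finset.sum_le_sum b3
    rw [← Finset.sum_mul] at b4
    have b5 : bex p A nI ≤ bex p A n0 := by
      apply bex_mono h0 h1
      intro S _
      simp only [nI, n0]
      split_ifs with a b
      · exact le_rfl
      · exact absurd (fun j hj => a j (Finset.mem_filter.1 hj).1) b
      · norm_num
      · exact le_rfl
    have b6 : 0 ≤ bex p A nI := bex_nonneg h0 h1 (fun S _ => by
      simp only [nI]; split_ifs <;> norm_num)
    have hpi : 0 ≤ p ^ #(R i) := by positivity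
    rw [b2] at b1
    have b7 : bex p A (fun S => if ∀ j ∈ insert i I, ¬ R j ⊆ S then (1:ℝ) else 0) ≤
        bex p A nI * (1 - p ^ #(R i) / 2) := by
      have c1 : (∑ j ∈ I1, p ^ #(R i ∪ R j)) * bex p A n0 ≤ p ^ #(R i) / 2 * bex p A n0 :=
        mul_le_mul_of_nonneg_right hΔi (b6.trans b5)
      have c2 : p ^ #(R i) / 2 * bex p A nI ≤ p ^ #(R i) / 2 * bex p A n0 :=
        mul_le_mul_of_nonneg_left b5 (by linarith)
      linarith
    refine b7.trans ?_
    rw [Finset.sum_insert hi, show -(p ^ #(R i) + ∑ j ∈ I, p ^ #(R j)) / 2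
      = -(∑ j ∈ I, p ^ #(R j)) / 2 + (-(p ^ #(R i) / 2)) by ring, Real.exp_add]
    have c3 : 1 - p ^ #(R i) / 2 ≤ Real.exp (-(p ^ #(R i) / 2)) := by
      have := Real.add_one_le_exp (-(p ^ #(R i) / 2))
      linarith
    exact (mul_le_mul_of_nonneg_left c3 b6).trans
      (mul_le_mul_of_nonneg_right ih' (Real.exp_pos _).le)

end Prob

section Pack
variable {α : Type*} [DecidableEq α] {ι V : Type*}

/-- `J` is a packing inside `S`. -/
def IsPack (I : Finset ι) (R : ι → Finset α) (U : ι → Finset V) (S : Finset α)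
    (J : Finset ι) : Prop :=
  J ⊆ I ∧ (∀ i ∈ J, R i ⊆ S) ∧ ∀ i ∈ J, ∀ j ∈ J, i ≠ j → Disjoint (U i) (U j)

/-- The packing number. -/
noncomputable def nu (I : Finset ι) (R : ι → Finset α) (U : ι → Finset V) (S : Finset α) : ℕ :=
  (I.powerset.filter (fun J => IsPack I R U S J)).sup Finset.card

lemma le_nu {I : Finset ι} {R : ι → Finset α} {U : ι → Finset V} {S : Finset α} {J : Finset ι}
    (h : IsPack I R U S J) : #J ≤ nu I R U S :=
  Finset.le_sup (f := Finset.card) (Finset.mem_filter.2 ⟨Finset.mem_powerset.2 h.1, h⟩)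

lemma exists_nu (I : Finset ι) (R : ι → Finset α) (U : ι → Finset V) (S : Finset α) :
    ∃ J, IsPack I R U S J ∧ #J = nu I R U S := by
  have hne : (I.powerset.filter (fun J => IsPack I R U S J)).Nonempty :=
    ⟨∅, Finset.mem_filter.2 ⟨Finset.empty_mem_powerset _, by simp [IsPack]⟩⟩
  obtain ⟨J, hJ, he⟩ := Finset.exists_mem_eq_sup _ hne Finset.card
  exact ⟨J, (Finset.mem_filter.1 hJ).2, he.symm⟩

lemma nu_mono (I : Finset ι) (R : ι → Finset α) (U : ι → Finset V) {S T : Finset α}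
    (h : S ⊆ T) : nu I R U S ≤ nu I R U T := by
  obtain ⟨J, hJ, he⟩ := exists_nu I R U S
  rw [← he]
  exact le_nu ⟨hJ.1, fun i hi => (hJ.2.1 i hi).trans h, hJ.2.2⟩

lemma nu_insert_le (I : Finset ι) (R : ι → Finset α) (U : ι → Finset V)
    (hUR : ∀ i ∈ I, ∀ j ∈ I, Disjoint (U i) (U j) → Disjoint (R i) (R j))
    (S : Finset α) (a : α) : nu I R U (insert a S) ≤ nu I R U (S.erase a) + 1 := by
  obtain ⟨J, hJ, he⟩ := exists_nu I R U (insert a S)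
  rw [← he]
  have h1 : IsPack I R U (S.erase a) (J.filter (fun i => a ∉ R i)) := by
    refine ⟨(Finset.filter_subset _ _).trans hJ.1, ?_, ?_⟩
    · intro i hi x hx
      obtain ⟨hi, hai⟩ := Finset.mem_filter.1 hi
      have hxa : x ≠ a := fun h => hai (h ▸ hx)
      have := hJ.2.1 i hi hx
      exact Finset.mem_erase.2 ⟨hxa, (Finset.mem_insert.1 this).resolve_left hxa⟩
    · intro i hi j hj
      exact hJ.2.2 i (Finset.mem_filter.1 hi).1 j (Finset.mem_filter.1 hj).1
  have h2 := le_nu h1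
  have h3 : #(J.filter (fun i => a ∈ R i)) ≤ 1 := by
    rw [Finset.card_le_one]
    intro i hi j hj
    obtain ⟨hi, hai⟩ := Finset.mem_filter.1 hi
    obtain ⟨hj, haj⟩ := Finset.mem_filter.1 hj
    by_contra hne
    exact Finset.disjoint_left.1 (hUR i (hJ.1 hi) j (hJ.1 hj) (hJ.2.2 i hi j hj hne)) hai haj
  have h4 := Finset.card_filter_add_card_filter_not (s := J) (fun i => a ∈ R i)
  omega

lemma nu_erase_sum (I : Finset ι) (R : ι → Finset α) (U : ι → Finset V) (K : ℕ)
    (hK : ∀ i ∈ I, #(R i) ≤ K)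
    (hUR : ∀ i ∈ I, ∀ j ∈ I, Disjoint (U i) (U j) → Disjoint (R i) (R j))
    (S A : Finset α) :
    ∑ a ∈ A, (if a ∈ S then ((nu I R U (insert a S) : ℝ) - nu I R U (S.erase a)) else 0)
      ≤ K * nu I R U S := by
  obtain ⟨J, hJ, he⟩ := exists_nu I R U S
  have h1 : ∀ a ∈ A, (if a ∈ S then ((nu I R U (insert a S) : ℝ) - nu I R U (S.erase a)) else 0)
      ≤ if a ∈ J.biUnion R then 1 else 0 := by
    intro a _
    by_cases haS : a ∈ S
    · rw [if_pos haS]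
      by_cases hb : a ∈ J.biUnion R
      · rw [if_pos hb]
        have := nu_insert_le I R U hUR S a
        have : (nu I R U (insert a S) : ℝ) ≤ nu I R U (S.erase a) + 1 := by exact_mod_cast this
        linarith
      · rw [if_neg hb, Finset.insert_eq_of_mem haS]
        have : IsPack I R U (S.erase a) J := by
          refine ⟨hJ.1, fun i hi x hx => Finset.mem_erase.2 ⟨?_, hJ.2.1 i hi hx⟩, hJ.2.2⟩
          rintro rfl
          exact hb (Finset.mem_biUnion.2 ⟨i, hi, hx⟩)
        have := le_nu this
        rw [he] at this
        have : (nu I R U S : ℝ) ≤ nu I R U (S.erase a) := by exact_mod_cast this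
        linarith
    · rw [if_neg haS]
      split_ifs <;> norm_num
  refine (Finset.sum_le_sum h1).trans ?_
  rw [Finset.sum_ite_mem, Finset.sum_const, nsmul_eq_mul, mul_one]
  have h2 : #(A ∩ J.biUnion R) ≤ #J * K :=
    (Finset.card_le_card Finset.inter_subset_right).trans
      (Finset.card_biUnion_le_card_mul _ _ _ (fun i hi => hK i (hJ.1 hi)))
  rw [he] at h2
  have : ((#(A ∩ J.biUnion R) : ℕ) : ℝ) ≤ ((nu I R U S * K : ℕ) : ℝ) := by exact_mod_cast h2
  push_cast at this
  linarith

lemma packing [DecidableEq ι] [DecidableEq V] {p : ℝ} (h0 : 0 ≤ p) (h1 : p ≤ 1) (A : Finset α)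
    (I : Finset ι) (R : ι → Finset α) (U : ι → Finset V) (hR : ∀ i ∈ I, R i ⊆ A) (K : ℕ)
    (hK : ∀ i ∈ I, #(R i) ≤ K)
    (hUR : ∀ i ∈ I, ∀ j ∈ I, Disjoint (U i) (U j) → Disjoint (R i) (R j))
    (hΔ : ∀ i ∈ I, ∑ j ∈ I with j ≠ i ∧ ¬ Disjoint (U i) (U j), p ^ #(R i ∪ R j)
      ≤ p ^ #(R i) / 2) (g : ℕ) (M : ℝ) (hM : 0 < M) (hμ : M ≤ ∑ i ∈ I, p ^ #(R i))
    (hg : 4 * (g : ℝ) ≤ M) :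
    bex p A (fun S => if nu I R U S < g then 1 else 0) ≤ 8 * K / M := by
  set B := bex p A (fun S => (nu I R U S : ℝ)) with hB
  -- expectation lower bound
  have hlow : M / 2 ≤ B := by
    have pt : ∀ S ⊆ A, (∑ i ∈ I, (if R i ⊆ S then (1:ℝ) else 0)) -
        ∑ i ∈ I, ∑ j ∈ I with j ≠ i ∧ ¬ Disjoint (U i) (U j),
          (if R i ∪ R j ⊆ S then (1:ℝ) else 0) ≤ nu I R U S := by
      intro S _
      let J := I.filter (fun i => R i ⊆ S ∧
        ∀ j ∈ I, R j ⊆ S → j ≠ i → Disjoint (U i) (U j))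
      have hJ : IsPack I R U S J := by
        refine ⟨Finset.filter_subset _ _, fun i hi => (Finset.mem_filter.1 hi).2.1, ?_⟩
        intro i hi j hj hne
        have hj' := Finset.mem_filter.1 hj
        exact (Finset.mem_filter.1 hi).2.2 j hj'.1 hj'.2.1 hne.symm
      have hle : (#J : ℝ) ≤ nu I R U S := by exact_mod_cast le_nu hJ
      refine le_trans ?_ hle
      rw [← Finset.sum_sub_distrib]
      have hc : (#J : ℝ) = ∑ i ∈ I, if (R i ⊆ S ∧
        ∀ j ∈ I, R j ⊆ S → j ≠ i → Disjoint (U i) (U j)) then (1:ℝ) else 0 := by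
        simp [J]
      rw [hc]
      apply Finset.sum_le_sum
      intro i hi
      have hnn : ∀ j ∈ I.filter (fun j => j ≠ i ∧ ¬ Disjoint (U i) (U j)),
          0 ≤ (if R i ∪ R j ⊆ S then (1:ℝ) else 0) := by
        intro j _
        split_ifs <;> norm_num
      have hs := Finset.sum_nonneg hnn
      by_cases hi1 : R i ⊆ S
      · by_cases hi2 : ∀ j ∈ I, R j ⊆ S → j ≠ i → Disjoint (U i) (U j)
        · rw [if_pos hi1, if_pos ⟨hi1, hi2⟩]; linarith
        · rw [if_pos hi1, if_neg (fun h => hi2 h.2)]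
          push Not at hi2
          obtain ⟨j, hj, hjS, hne, hd⟩ := hi2
          have := Finset.single_le_sum hnn (Finset.mem_filter.2 ⟨hj, hne, hd⟩)
          rw [if_pos (Finset.union_subset hi1 hjS)] at this
          linarith
      · rw [if_neg hi1, if_neg (fun h => hi1 h.1)]; linarith
    have := bex_mono h0 h1 pt
    rw [bex_sub, bex_sum, bex_sum] at this
    have e1 : ∑ i ∈ I, bex p A (fun S => if R i ⊆ S then (1:ℝ) else 0) = ∑ i ∈ I, p ^ #(R i) :=
      Finset.sum_congr rfl (fun i hi => bex_prob p (hR i hi))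
    have e2 : ∑ i ∈ I, bex p A (fun S => ∑ j ∈ I with j ≠ i ∧ ¬ Disjoint (U i) (U j),
          (if R i ∪ R j ⊆ S then (1:ℝ) else 0)) ≤ ∑ i ∈ I, p ^ #(R i) / 2 := by
      apply Finset.sum_le_sum
      intro i hi
      rw [bex_sum]
      refine le_trans (le_of_eq ?_) (hΔ i hi)
      apply Finset.sum_congr rfl
      intro j hj
      exact bex_prob p (Finset.union_subset (hR i hi) (hR j (Finset.mem_filter.1 hj).1))
    rw [← Finset.sum_div] at e2
    rw [e1] at this
    linarith
  have hBpos : 0 < B := by linarith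
  -- variance
  have hvar : bex p A (fun S => (nu I R U S : ℝ) ^ 2) - B ^ 2 ≤ K * B := by
    refine (poincare h0 h1 A (fun S => (nu I R U S : ℝ))).trans ?_
    have step : ∀ a ∈ A,
        p * bex p A (fun S => ((nu I R U (insert a S) : ℝ) - nu I R U (S.erase a)) ^ 2) ≤
        bex p A (fun S => if a ∈ S then ((nu I R U (insert a S) : ℝ) - nu I R U (S.erase a))
          else 0) := by
      intro a ha
      rw [bex_ind p ha (g := fun S => ((nu I R U (insert a S) : ℝ) - nu I R U (S.erase a)))]
      · apply mul_le_mul_of_nonneg_left _ h0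
        apply bex_mono h0 h1
        intro S _
        have u1 : (nu I R U (insert a S) : ℝ) ≤ nu I R U (S.erase a) + 1 := by
          exact_mod_cast nu_insert_le I R U hUR S a
        have u2 : (nu I R U (S.erase a) : ℝ) ≤ nu I R U (insert a S) := by
          exact_mod_cast nu_mono I R U ((Finset.erase_subset a S).trans (Finset.subset_insert a S))
        nlinarith
      · intro S
        rw [Finset.insert_idem, Finset.erase_insert_eq_erase]
    rw [Finset.mul_sum]
    refine (Finset.sum_le_sum step).trans ?_
    rw [← bex_sum, hB, ← bex_smul]
    exact bex_mono h0 h1 (fun S _ => nu_erase_sum I R U K hK hUR S A)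
  have hvar2 : bex p A (fun S => ((nu I R U S : ℝ) - B) ^ 2) ≤ K * B := by
    have : (fun S => ((nu I R U S : ℝ) - B) ^ 2)
        = fun S => ((nu I R U S : ℝ) ^ 2 - (2 * B) * (nu I R U S : ℝ)) + B ^ 2 := by
      funext S; ring
    rw [this, bex_add, bex_sub, bex_smul, bex_const, ← hB]
    linarith
  have hcheb : bex p A (fun S => if nu I R U S < g then 1 else 0) ≤
      (4 / B ^ 2) * bex p A (fun S => ((nu I R U S : ℝ) - B) ^ 2) := by
    rw [← bex_smul]
    apply bex_mono h0 h1
    intro S _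
    split_ifs with h
    · have : (nu I R U S : ℝ) < g := by exact_mod_cast h
      have h2 : B / 2 ≤ B - nu I R U S := by linarith
      have h3 : (B / 2) ^ 2 ≤ (B - nu I R U S) ^ 2 := by
        apply pow_le_pow_left₀ (by linarith) h2
      rw [div_mul_eq_mul_div, le_div_iff₀ (by positivity)]
      nlinarith
    · positivity
  refine hcheb.trans ?_
  calc (4 / B ^ 2) * bex p A (fun S => ((nu I R U S : ℝ) - B) ^ 2)
      ≤ (4 / B ^ 2) * (K * B) := mul_le_mul_of_nonneg_left hvar2 (by positivity)
    _ = 4 * K / B := by field_simp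
    _ ≤ 4 * K / (M / 2) := by
        apply div_le_div_of_nonneg_left (by positivity) (by linarith) hlow
    _ = 8 * K / M := by field_simp; ring

end Pack

section Graph
variable {V : Type*} [Fintype V] [DecidableEq V]

/-- Edges of the complete graph on `T`. -/
noncomputable def Kd (T : Finset V) : Finset (Sym2 V) := T.sym2.filter (fun e => ¬ e.IsDiag)

lemma mem_Kd {T : Finset V} {e : Sym2 V} : e ∈ Kd T ↔ (∀ v ∈ e, v ∈ T) ∧ ¬ e.IsDiag := by
  simp [Kd, Finset.mem_sym2_iff]

lemma Kd_inter (T T' : Finset V) : Kd T ∩ Kd T' = Kd (T ∩ T') := by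
  ext e
  simp only [Finset.mem_inter, mem_Kd]
  constructor
  · rintro ⟨⟨a, b⟩, c, d⟩
    exact ⟨fun v hv => ⟨a v hv, c v hv⟩, b⟩
  · rintro ⟨a, b⟩
    exact ⟨⟨fun v hv => (a v hv).1, b⟩, fun v hv => (a v hv).2, b⟩

lemma Kd_mono {T T' : Finset V} (h : T ⊆ T') : Kd T ⊆ Kd T' := by
  intro e he
  rw [mem_Kd] at he ⊢
  exact ⟨fun v hv => h (he.1 v hv), he.2⟩

lemma Kd_card (T : Finset V) : #(Kd T) = (#T).choose 2 := by
  rw [← Sym2.card_image_offDiag T]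
  congr 1
  ext e
  induction e using Sym2.ind with
  | _ x y =>
    simp only [mem_Kd, Finset.mem_image, Finset.mem_offDiag, Sym2.mem_iff, Sym2.mk_isDiag_iff,
      Prod.exists]
    constructor
    · rintro ⟨a, b⟩
      exact ⟨x, y, ⟨a x (Or.inl rfl), a y (Or.inr rfl), b⟩, rfl⟩
    · rintro ⟨u, v, ⟨hu, hv, huv⟩, he⟩
      rcases Sym2.eq_iff.1 he with ⟨rfl, rfl⟩ | ⟨rfl, rfl⟩
      · exact ⟨by rintro w (rfl | rfl) <;> assumption, huv⟩
      · exact ⟨by rintro w (rfl | rfl) <;> assumption, fun h => huv h.symm⟩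

lemma Kd_union_card {r : ℕ} (T T' : Finset V) (h : #T = r) (h' : #T' = r) :
    #(Kd T ∪ Kd T') = r.choose 2 + (r.choose 2 - (#(T' ∩ T)).choose 2) := by
  have h1 := Finset.card_union_add_card_inter (Kd T) (Kd T')
  rw [Kd_inter, Kd_card, Kd_card, Kd_card, h, h', Finset.inter_comm] at h1
  have : (#(T' ∩ T)).choose 2 ≤ r.choose 2 :=
    Nat.choose_le_choose 2 (h ▸ Finset.card_le_card Finset.inter_subset_right)
  omega

lemma trace_count (A Z : Finset V) (r : ℕ) (𝒯 : Finset (Finset V)) (h𝒯 : ∀ T ∈ 𝒯, #T = r) :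
    #(𝒯.filter (fun T => T ∩ A = Z)) ≤ Fintype.card V ^ (r - #Z) := by
  calc #(𝒯.filter (fun T => T ∩ A = Z))
      ≤ #(Finset.powersetCard (r - #Z) (Finset.univ : Finset V)) := by
        apply Finset.card_le_card_of_injOn (fun T => T \ A)
        · intro T hT
          obtain ⟨h1, h2⟩ := Finset.mem_filter.1 hT
          refine Finset.mem_coe.2 (Finset.mem_powersetCard.2 ⟨Finset.subset_univ _, ?_⟩)
          show #(T \ A) = r - #Z
          have := Finset.card_sdiff_add_card_inter T A
          rw [h2, h𝒯 T h1] at this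
          omega
        · intro T hT T' hT' he
          obtain ⟨h1, h2⟩ := Finset.mem_filter.1 hT
          obtain ⟨h1', h2'⟩ := Finset.mem_filter.1 hT'
          simp only at he
          rw [← Finset.sdiff_union_inter T A, ← Finset.sdiff_union_inter T' A, he, h2, h2']
    _ = (Fintype.card V).choose (r - #Z) := by rw [Finset.card_powersetCard, Finset.card_univ]
    _ ≤ _ := Nat.choose_le_pow _ _

lemma trace_sum (hV : 0 < Fintype.card V) (A : Finset V) (r : ℕ) (𝒯 : Finset (Finset V))
    (h𝒯 : ∀ T ∈ 𝒯, #T = r) (F : Finset V → ℝ) (c : ℝ) (hc : 0 ≤ c)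
    (hF : ∀ T ∈ 𝒯, (Fintype.card V : ℝ) ^ (r - #(T ∩ A)) * F T ≤ c) :
    ∑ T ∈ 𝒯, F T ≤ 2 ^ #A * c := by
  have hV' : (0:ℝ) < Fintype.card V := by exact_mod_cast hV
  rw [← Finset.sum_fiberwise_of_maps_to (s := 𝒯) (t := A.powerset) (g := fun T => T ∩ A)
    (fun T _ => Finset.mem_powerset.2 Finset.inter_subset_right)]
  have : ∀ Z ∈ A.powerset, ∑ T ∈ 𝒯 with T ∩ A = Z, F T ≤ c := by
    intro Z _
    have h1 : ∀ T ∈ 𝒯.filter (fun T => T ∩ A = Z),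
        F T ≤ c / (Fintype.card V : ℝ) ^ (r - #Z) := by
      intro T hT
      obtain ⟨hT1, hT2⟩ := Finset.mem_filter.1 hT
      have := hF T hT1
      rw [hT2] at this
      rw [le_div_iff₀ (by positivity)]
      linarith
    have h2 := Finset.sum_le_card_nsmul _ _ _ h1
    refine h2.trans ?_
    rw [nsmul_eq_mul]
    have h3 : (#(𝒯.filter (fun T => T ∩ A = Z)) : ℝ) ≤ (Fintype.card V : ℝ) ^ (r - #Z) := by
      exact_mod_cast trace_count A Z r 𝒯 h𝒯
    calc _ ≤ (Fintype.card V : ℝ) ^ (r - #Z) * (c / (Fintype.card V : ℝ) ^ (r - #Z)) :=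
          mul_le_mul_of_nonneg_right h3 (by positivity)
      _ = c := by field_simp
  refine (Finset.sum_le_card_nsmul _ _ _ this).trans ?_
  rw [nsmul_eq_mul, Finset.card_powerset]
  push_cast
  exact le_rfl

lemma conflict_clique (hV : 0 < Fintype.card V) {p : ℝ} (h0 : 0 ≤ p) {r t0 : ℕ} {ε : ℝ}
    (hε0 : 0 ≤ ε)
    (hε : ∀ t, t0 ≤ t → t < r →
      (Fintype.card V : ℝ) ^ (r - t) * p ^ (r.choose 2 - t.choose 2) ≤ ε)
    (T : Finset V) (hT : #T = r) (𝒯 : Finset (Finset V))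
    (h𝒯 : ∀ T' ∈ 𝒯, #T' = r ∧ T' ≠ T ∧ t0 ≤ #(T' ∩ T)) :
    ∑ T' ∈ 𝒯, p ^ #(Kd T ∪ Kd T') ≤ p ^ (r.choose 2) * (2 ^ r * ε) := by
  have := trace_sum hV T r 𝒯 (fun T' h => (h𝒯 T' h).1) (fun T' => p ^ #(Kd T ∪ Kd T'))
    (p ^ (r.choose 2) * ε) (by positivity) (by
      intro T' hT'
      obtain ⟨a, b, c⟩ := h𝒯 T' hT'
      have hlt : #(T' ∩ T) < r := by
        rw [← a]
        apply Finset.card_lt_card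
        refine ⟨Finset.inter_subset_left, fun h => b ?_⟩
        have hsub : T' ⊆ T := h.trans Finset.inter_subset_right
        exact Finset.eq_of_subset_of_card_le hsub (by omega)
      rw [Kd_union_card T T' hT a, pow_add]
      have := mul_le_mul_of_nonneg_left (hε _ c hlt) (pow_nonneg h0 (r.choose 2))
      linarith)
  rw [hT] at this
  linarith

lemma two_choose (r : ℕ) : 2 * r.choose 2 = r * (r - 1) := by
  rw [Nat.choose_two_right, Nat.mul_div_cancel' (Nat.even_mul_pred_self r).two_dvd]

lemma pow_small {n : ℕ} {p ε : ℝ} (h0 : 0 ≤ p) (h1 : p ≤ 1) (hε0 : 0 ≤ ε) (hε1 : ε ≤ 1) {m : ℕ}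
    (h : (n : ℝ) ^ 2 * p ^ m ≤ ε ^ 2) {r t : ℕ} (htr : t < r) (hm : m + 1 ≤ r + t) :
    (n : ℝ) ^ (r - t) * p ^ (r.choose 2 - t.choose 2) ≤ ε := by
  have he : (r.choose 2 - t.choose 2) * 2 = (r + t - 1) * (r - t) := by
    have a := two_choose r
    have b := two_choose t
    obtain ⟨k, rfl⟩ : ∃ k, r = t + (k + 1) := ⟨r - t - 1, by omega⟩
    have e1 : t + (k + 1) - t = k + 1 := by omega
    have e2 : t + (k + 1) + t - 1 = 2 * t + k := by omega
    have e3 : t + (k + 1) - 1 = t + k := by omega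
    rw [e1, e2]
    rw [e3] at a
    rcases t with _ | t
    · simp at a b ⊢; nlinarith
    · simp only [Nat.add_sub_cancel] at b
      have : (t + 1 + (k + 1)).choose 2 * 2 = (t + 1).choose 2 * 2 + (2 * (t + 1) + k) * (k + 1) := by
        nlinarith
      omega
  have hsq : ((n : ℝ) ^ (r - t) * p ^ (r.choose 2 - t.choose 2)) ^ 2 ≤ ε ^ 2 := by
    calc ((n : ℝ) ^ (r - t) * p ^ (r.choose 2 - t.choose 2)) ^ 2
        = ((n : ℝ) ^ 2 * p ^ (r + t - 1)) ^ (r - t) := by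
          rw [mul_pow, mul_pow, ← pow_mul, ← pow_mul, he, ← pow_mul, ← pow_mul, mul_comm 2 (r - t)]
      _ ≤ (ε ^ 2) ^ (r - t) := by
          apply pow_le_pow_left₀ (by positivity)
          refine le_trans ?_ h
          apply mul_le_mul_of_nonneg_left _ (by positivity)
          exact pow_le_pow_of_le_one h0 h1 (by omega)
      _ ≤ (ε ^ 2) ^ 1 := by
          apply pow_le_pow_of_le_one (by positivity) _ (by omega)
          exact pow_le_one₀ hε0 hε1
      _ = ε ^ 2 := pow_one _
  exact (pow_le_pow_iff_left₀ (by positivity) hε0 (by norm_num)).1 hsq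

lemma pow_large {n : ℕ} {p m : ℝ} (h0 : 0 ≤ p) (hm : 1 ≤ m) {s k e : ℕ} (hk : 1 ≤ k)
    (h : m ^ 2 ≤ (n : ℝ) ^ 2 * p ^ s) (he : 2 * e = s * k) : m ≤ (n : ℝ) ^ k * p ^ e := by
  have hsq : m ^ 2 ≤ ((n : ℝ) ^ k * p ^ e) ^ 2 := by
    calc m ^ 2 ≤ (m ^ 2) ^ k := by
          apply le_self_pow₀ (one_le_pow₀ hm) (by omega)
      _ ≤ ((n : ℝ) ^ 2 * p ^ s) ^ k := pow_le_pow_left₀ (by positivity) h k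
      _ = ((n : ℝ) ^ k * p ^ e) ^ 2 := by
          rw [mul_pow, mul_pow, ← pow_mul, ← pow_mul, ← pow_mul, ← pow_mul, mul_comm e 2, he,
            mul_comm 2 k]
  exact (pow_le_pow_iff_left₀ (by positivity) (by positivity) (by norm_num)).1 hsq

/-- All (non-loop) pairs. -/
noncomputable def allE (V : Type*) [Fintype V] [DecidableEq V] : Finset (Sym2 V) :=
  Kd (Finset.univ : Finset V)

/-- Every set with at least `w` vertices contains an `s`-clique of the random graph. -/
def DenseCl (s w : ℕ) (S : Finset (Sym2 V)) : Prop :=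
  ∀ W : Finset V, w ≤ #W → ∃ T ⊆ W, #T = s ∧ Kd T ⊆ S

lemma dense_prob (hV : 0 < Fintype.card V) {p : ℝ} (h0 : 0 ≤ p) (h1 : p ≤ 1) {s w : ℕ}
    (hsm : (Fintype.card V : ℝ) ^ 2 * p ^ (s + 1) ≤ (1 / (2 * 2 ^ s)) ^ 2)
    (hμ : 4 * (Fintype.card V : ℝ) ≤ (w.choose s : ℝ) * p ^ (s.choose 2)) :
    bex p (allE V) (fun S => if DenseCl s w S then 0 else 1) ≤ Real.exp (-(Fintype.card V : ℝ)) := by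
  set N := Fintype.card V with hN
  have each : ∀ W : Finset V, w ≤ #W →
      bex p (allE V) (fun S => if ∀ T ∈ Finset.powersetCard s W, ¬ Kd T ⊆ S then 1 else 0)
        ≤ Real.exp (-2 * (N : ℝ)) := by
    intro W hW
    refine le_trans (le_of_eq ?_) ((janson h0 h1 (allE V) Kd (Finset.powersetCard s W)
      (fun T _ => Kd_mono (Finset.subset_univ T)) ?_).trans ?_)
    · congr!
    · intro T hT
      have hTc := (Finset.mem_powersetCard.1 hT).2
      refine (conflict_clique hV h0 (r := s) (t0 := 2) (ε := 1 / (2 * 2 ^ s)) (by positivity)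
        ?_ T hTc _ ?_).trans ?_
      · intro t ht hts
        refine pow_small h0 h1 (by positivity) ?_ hsm hts (by omega)
        rw [div_le_one (by positivity)]
        have : (1:ℝ) ≤ 2 ^ s := one_le_pow₀ (by norm_num)
        linarith
      · intro T' hT'
        obtain ⟨a, b, c⟩ := Finset.mem_filter.1 hT'
        refine ⟨(Finset.mem_powersetCard.1 a).2, b, ?_⟩
        by_contra hlt
        apply c
        rw [Finset.disjoint_iff_inter_eq_empty, Kd_inter, ← Finset.card_eq_zero, Kd_card,
          Finset.inter_comm]
        exact Nat.choose_eq_zero_of_lt (by omega)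
      · rw [Kd_card, hTc]
        apply le_of_eq
        field_simp
    · apply Real.exp_le_exp.2
      have e : ∑ T ∈ Finset.powersetCard s W, p ^ #(Kd T) = ((#W).choose s : ℝ) * p ^ s.choose 2 := by
        rw [Finset.sum_congr rfl (g := fun _ => p ^ s.choose 2), Finset.sum_const,
          Finset.card_powersetCard, nsmul_eq_mul]
        intro T hT
        rw [Kd_card, (Finset.mem_powersetCard.1 hT).2]
      rw [e]
      have c1 : (w.choose s : ℝ) ≤ (#W).choose s := by
        exact_mod_cast Nat.choose_le_choose s hW
      have := mul_le_mul_of_nonneg_right c1 (pow_nonneg h0 (s.choose 2))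
      linarith
  have pt : ∀ S ⊆ allE V, (if DenseCl s w S then (0:ℝ) else 1) ≤
      ∑ W : Finset V, if w ≤ #W then
        (if ∀ T ∈ Finset.powersetCard s W, ¬ Kd T ⊆ S then 1 else 0) else 0 := by
    intro S _
    have nn : ∀ W ∈ (Finset.univ : Finset (Finset V)), (0:ℝ) ≤ if w ≤ #W then
        (if ∀ T ∈ Finset.powersetCard s W, ¬ Kd T ⊆ S then 1 else 0) else 0 := by
      intro W _
      split_ifs <;> norm_num
    split_ifs with h
    · exact Finset.sum_nonneg nn
    · unfold DenseCl at h
      push Not at h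
      obtain ⟨W, hW, hh⟩ := h
      have := Finset.single_le_sum nn (Finset.mem_univ W)
      rw [if_pos hW, if_pos] at this
      · exact this
      · intro T hT
        obtain ⟨a, b⟩ := Finset.mem_powersetCard.1 hT
        exact hh T a b
  refine (bex_mono h0 h1 pt).trans ?_
  rw [bex_sum]
  have : ∀ W ∈ (Finset.univ : Finset (Finset V)), bex p (allE V) (fun S => if w ≤ #W then
        (if ∀ T ∈ Finset.powersetCard s W, ¬ Kd T ⊆ S then 1 else 0) else 0)
        ≤ Real.exp (-2 * (N : ℝ)) := by
    intro W _
    by_cases hW : w ≤ #W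
    · simp only [if_pos hW]
      exact each W hW
    · simp only [if_neg hW, bex_const]
      exact (Real.exp_pos _).le
  refine (Finset.sum_le_card_nsmul _ _ _ this).trans ?_
  rw [nsmul_eq_mul, Finset.card_univ, Fintype.card_finset, ← hN]
  push_cast
  have h2 : (2:ℝ) ^ N ≤ Real.exp N := by
    rw [show (N:ℝ) = N * 1 by ring, Real.exp_nat_mul]
    apply pow_le_pow_left₀ (by norm_num)
    have := Real.add_one_le_exp (1:ℝ)
    linarith
  calc (2:ℝ) ^ N * Real.exp (-2 * N) ≤ Real.exp N * Real.exp (-2 * N) :=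
        mul_le_mul_of_nonneg_right h2 (Real.exp_pos _).le
    _ = Real.exp (-N) := by rw [← Real.exp_add]; congr 1; ring

lemma rand_pack (hV : 0 < Fintype.card V) {p : ℝ} (h0 : 0 ≤ p) (h1 : p ≤ 1) {s : ℕ}
    (hsm : (Fintype.card V : ℝ) ^ 2 * p ^ (s + 1) ≤ (1 / (2 * 2 ^ (s + 1))) ^ 2)
    (U : Finset V) (M : ℝ) (hM : 0 < M)
    (hμ : M ≤ ((#U).choose (s + 1) : ℝ) * p ^ ((s + 1).choose 2)) (g : ℕ)
    (hg : 4 * (g : ℝ) ≤ M) :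
    bex p (allE V) (fun S => if nu (Finset.powersetCard (s + 1) U) Kd id S < g then 1 else 0)
      ≤ 8 * ((s + 1).choose 2 : ℕ) / M := by
  apply packing h0 h1 _ _ _ _ (fun T _ => Kd_mono (Finset.subset_univ T)) _ _ _ _ g M hM _ hg
  · intro T hT
    rw [Kd_card, (Finset.mem_powersetCard.1 hT).2]
  · intro T _ T' _ h
    rw [Finset.disjoint_iff_inter_eq_empty] at h ⊢
    rw [Kd_inter]
    simp only [id] at h
    rw [h, ← Finset.card_eq_zero, Kd_card]
    rfl
  · intro T hT
    have hTc := (Finset.mem_powersetCard.1 hT).2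
    refine (conflict_clique hV h0 (r := s + 1) (t0 := 1) (ε := 1 / (2 * 2 ^ (s + 1)))
      (by positivity) ?_ T hTc _ ?_).trans ?_
    · intro t ht hts
      refine pow_small h0 h1 (by positivity) ?_ hsm hts (by omega)
      rw [div_le_one (by positivity)]
      have : (1:ℝ) ≤ 2 ^ (s + 1) := one_le_pow₀ (by norm_num)
      linarith
    · intro T' hT'
      obtain ⟨a, b, c⟩ := Finset.mem_filter.1 hT'
      refine ⟨(Finset.mem_powersetCard.1 a).2, b, ?_⟩
      by_contra hlt
      apply c
      rw [Finset.disjoint_iff_inter_eq_empty, ← Finset.card_eq_zero, Finset.inter_comm]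
      simp only [id]
      omega
    · rw [Kd_card, hTc]
      apply le_of_eq
      field_simp
  · refine hμ.trans (le_of_eq ?_)
    rw [Finset.sum_congr rfl (g := fun _ => p ^ (s + 1).choose 2), Finset.sum_const,
      Finset.card_powersetCard, nsmul_eq_mul]
    intro T hT
    rw [Kd_card, (Finset.mem_powersetCard.1 hT).2]

end Graph

section EdgePack
variable {V : Type*} [Fintype V] [DecidableEq V]

/-- Vertex set of the potential copy. -/
noncomputable def UU (i : Sym2 V × Finset V) : Finset V := i.1.toFinset ∪ i.2

/-- Random edges required by the potential copy. -/
noncomputable def RR (i : Sym2 V × Finset V) : Finset (Sym2 V) := (Kd (UU i)).erase i.1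

/-- Potential copies using one edge of `F`. -/
noncomputable def II (F : Finset (Sym2 V)) (U : Finset V) (s : ℕ) : Finset (Sym2 V × Finset V) :=
  (F ×ˢ Finset.powersetCard (s - 1) U).filter (fun i => Disjoint i.1.toFinset i.2)

lemma mem_II {F : Finset (Sym2 V)} {U : Finset V} {s : ℕ} {i : Sym2 V × Finset V} :
    i ∈ II F U s ↔ i.1 ∈ F ∧ i.2 ⊆ U ∧ #i.2 = s - 1 ∧ Disjoint i.1.toFinset i.2 := by
  simp [II, Finset.mem_powersetCard, and_assoc]

variable {F : Finset (Sym2 V)} {U : Finset V} {s : ℕ}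

lemma fst_mem_Kd (hF : F ⊆ Kd U) {i : Sym2 V × Finset V} (hi : i ∈ II F U s) {A : Finset V}
    (hA : i.1.toFinset ⊆ A) : i.1 ∈ Kd A := by
  rw [mem_Kd]
  exact ⟨fun v hv => hA (Sym2.mem_toFinset.2 hv), (mem_Kd.1 (hF (mem_II.1 hi).1)).2⟩

lemma fst_card (hF : F ⊆ Kd U) {i : Sym2 V × Finset V} (hi : i ∈ II F U s) :
    #i.1.toFinset = 2 :=
  Sym2.card_toFinset_of_not_isDiag _ (mem_Kd.1 (hF (mem_II.1 hi).1)).2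

lemma UU_card (hs : 2 ≤ s) (hF : F ⊆ Kd U) {i : Sym2 V × Finset V} (hi : i ∈ II F U s) :
    #(UU i) = s + 1 := by
  rw [UU, Finset.card_union_of_disjoint (mem_II.1 hi).2.2.2, fst_card hF hi, (mem_II.1 hi).2.2.1]
  omega

lemma UU_sub (hF : F ⊆ Kd U) {i : Sym2 V × Finset V} (hi : i ∈ II F U s) : UU i ⊆ U := by
  apply Finset.union_subset _ (mem_II.1 hi).2.1
  intro v hv
  exact (mem_Kd.1 (hF (mem_II.1 hi).1)).1 v (Sym2.mem_toFinset.1 hv)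

lemma RR_card (hs : 2 ≤ s) (hF : F ⊆ Kd U) {i : Sym2 V × Finset V} (hi : i ∈ II F U s) :
    #(RR i) = (s + 1).choose 2 - 1 := by
  rw [RR, Finset.card_erase_of_mem (fst_mem_Kd hF hi (A := UU i) Finset.subset_union_left), Kd_card,
    UU_card hs hF hi]

lemma II_card (hF : F ⊆ Kd U) : #F * (#U - 2).choose (s - 1) ≤ #(II F U s) := by
  rw [Finset.card_eq_sum_card_fiberwise (f := Prod.fst) (s := II F U s) (t := F)
    (fun i hi => (mem_II.1 hi).1)]
  rw [← smul_eq_mul]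
  apply Finset.card_nsmul_le_sum
  intro f hf
  have h2 : #f.toFinset = 2 := Sym2.card_toFinset_of_not_isDiag _ (mem_Kd.1 (hF hf)).2
  have hsub : f.toFinset ⊆ U := fun v hv => (mem_Kd.1 (hF hf)).1 v (Sym2.mem_toFinset.1 hv)
  have e : (#U - 2).choose (s - 1) = #(Finset.powersetCard (s - 1) (U \ f.toFinset)) := by
    rw [Finset.card_powersetCard, Finset.card_sdiff_of_subset hsub, h2]
  rw [e]
  apply Finset.card_le_card_of_injOn (fun T => (f, T))
  · intro T hT
    obtain ⟨a, b⟩ := Finset.mem_powersetCard.1 hT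
    refine Finset.mem_coe.2 (Finset.mem_filter.2 ⟨mem_II.2 ⟨hf, ?_, b, ?_⟩, rfl⟩)
    · exact a.trans Finset.sdiff_subset
    · exact Finset.disjoint_of_subset_right a Finset.disjoint_sdiff
  · intro T _ T' _ h
    exact (Prod.mk.inj h).2

/-- local weight bound -/
lemma edge_local (hs : 2 ≤ s) (hF : F ⊆ Kd U) {q c0 : ℝ} (h0 : 0 ≤ q) (h1 : q ≤ 1)
    (hN : 0 < Fintype.card V)
    (hc0 : 1 ≤ c0) (hc : (Fintype.card V : ℝ) ^ s * q ^ ((s + 1).choose 2 - 1) ≤ c0)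
    (hq : ∀ t, 1 ≤ t → t ≤ s → 1 ≤ (Fintype.card V : ℝ) ^ (t - 1) * q ^ (t.choose 2))
    {i j : Sym2 V × Finset V} (hi : i ∈ II F U s) (hj : j ∈ II F U s) (hne : j ≠ i)
    (hd : ¬ Disjoint (UU i) (UU j)) :
    (Fintype.card V : ℝ) ^ (s - 1 - #(j.2 ∩ UU i)) * q ^ #(RR i ∪ RR j) ≤
      q ^ ((s + 1).choose 2 - 1) * (c0 / (Fintype.card V : ℝ) ^ 2 +
        (if ∃ v ∈ UU i, v ∈ j.1 then c0 / (Fintype.card V : ℝ) else 0) +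
        (if j.1 ∈ Kd (UU i) then c0 * q else 0)) := by
  have hN' : (0:ℝ) < Fintype.card V := by exact_mod_cast hN
  set N : ℝ := (Fintype.card V : ℝ) with hNdef
  set e0 := (s + 1).choose 2 - 1 with he0
  set A := UU i with hA
  set a := #(j.1.toFinset ∩ A) with ha
  set z := #(j.2 ∩ A) with hz
  have hAc : #A = s + 1 := UU_card hs hF hi
  have ht : #(UU j ∩ A) = a + z := by
    rw [UU, Finset.union_inter_distrib_right, Finset.card_union_of_disjoint]
    exact Finset.disjoint_of_subset_left Finset.inter_subset_left
      (Finset.disjoint_of_subset_right Finset.inter_subset_left (mem_II.1 hj).2.2.2)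
  have ht1 : 1 ≤ a + z := by
    rw [← ht, Nat.one_le_iff_ne_zero, Finset.card_ne_zero, ← Finset.not_disjoint_iff_nonempty_inter]
    exact fun h => hd h.symm
  have hz1 : z ≤ s - 1 := by
    rw [← (mem_II.1 hj).2.2.1]
    exact Finset.card_le_card Finset.inter_subset_left
  have ha2 : a ≤ 2 := by
    rw [← fst_card hF hj]
    exact Finset.card_le_card Finset.inter_subset_left
  have hch : (s + 1).choose 2 = s.choose 2 + s := by
    rw [Nat.choose_succ_succ' s 1]; simp; ring
  set x := #(RR i ∩ RR j) with hx
  have hsub : RR i ∩ RR j ⊆ Kd (UU j ∩ A) := by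
    rw [Finset.inter_comm (UU j) A, ← Kd_inter]
    exact Finset.inter_subset_inter (Finset.erase_subset _ _) (Finset.erase_subset _ _)
  have hx1 : x ≤ (a + z).choose 2 := by
    rw [← ht, ← Kd_card]
    exact Finset.card_le_card hsub
  have hxe : x ≤ e0 := by
    rw [he0, ← RR_card hs hF hi]
    exact Finset.card_le_card Finset.inter_subset_left
  have hU : #(RR i ∪ RR j) = e0 + (e0 - x) := by
    have := Finset.card_union_add_card_inter (RR i) (RR j)
    rw [RR_card hs hF hi, RR_card hs hF hj] at this
    omega
  rw [hU, pow_add]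
  suffices hmain : N ^ (s - 1 - z) * q ^ (e0 - x) ≤ (c0 / N ^ 2 +
        (if ∃ v ∈ A, v ∈ j.1 then c0 / N else 0) + (if j.1 ∈ Kd A then c0 * q else 0)) by
    have := mul_le_mul_of_nonneg_left hmain (pow_nonneg h0 e0)
    linarith
  have nn1 : 0 ≤ c0 / N ^ 2 := by positivity
  have nn2 : 0 ≤ (if ∃ v ∈ A, v ∈ j.1 then c0 / N else 0) := by
    split_ifs
    · positivity
    · exact le_rfl
  have nn3 : 0 ≤ (if j.1 ∈ Kd A then c0 * q else 0) := by
    split_ifs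
    · positivity
    · exact le_rfl
  -- generic estimate
  have gen : ∀ t b m : ℕ, 1 ≤ t → t ≤ s → (t.choose 2 ≤ e0) → (e0 - x ≥ e0 - t.choose 2 + b) →
      (s - 1 - z) + (t - 1) + m = s → N ^ (s - 1 - z) * q ^ (e0 - x) * N ^ m ≤ c0 * q ^ b := by
    intro t b m h1t hts hte hx' hexp
    have y := hq t h1t hts
    calc N ^ (s - 1 - z) * q ^ (e0 - x) * N ^ m
        ≤ N ^ (s - 1 - z) * q ^ (e0 - t.choose 2 + b) * N ^ m := by
          apply mul_le_mul_of_nonneg_right _ (by positivity)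
          apply mul_le_mul_of_nonneg_left _ (by positivity)
          exact pow_le_pow_of_le_one h0 h1 hx'
      _ ≤ (N ^ (s - 1 - z) * q ^ (e0 - t.choose 2 + b) * N ^ m) * (N ^ (t - 1) * q ^ t.choose 2) :=
          le_mul_of_one_le_right (by positivity) y
      _ = (N ^ ((s - 1 - z) + (t - 1) + m)) * q ^ ((e0 - t.choose 2) + t.choose 2) * q ^ b := by
          ring
      _ = (N ^ s * q ^ e0) * q ^ b := by rw [hexp, Nat.sub_add_cancel hte]
      _ ≤ c0 * q ^ b := mul_le_mul_of_nonneg_right hc (by positivity)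
  have hle : ∀ t, t ≤ s → t.choose 2 ≤ e0 := by
    intro t ht
    have := Nat.choose_le_choose 2 ht
    omega
  interval_cases hav : a
  · -- a = 0
    have := gen z 0 2 (by omega) (by omega) (hle z (by omega)) (by
      have : x ≤ z.choose 2 := by simpa using hx1
      omega) (by omega)
    have h3 : N ^ (s - 1 - z) * q ^ (e0 - x) ≤ c0 / N ^ 2 := by
      rw [le_div_iff₀ (by positivity)]
      simpa using this
    linarith
  · -- a = 1
    have := gen (1 + z) 0 1 (by omega) (by omega) (hle _ (by omega)) (by omega) (by omega)
    have hex : ∃ v ∈ A, v ∈ j.1 := by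
      obtain ⟨v, hv⟩ := Finset.card_pos.1 (show 0 < #(j.1.toFinset ∩ A) by omega)
      obtain ⟨h1, h2⟩ := Finset.mem_inter.1 hv
      exact ⟨v, h2, Sym2.mem_toFinset.1 h1⟩
    have h3 : N ^ (s - 1 - z) * q ^ (e0 - x) ≤ c0 / N := by
      rw [le_div_iff₀ (by positivity)]
      simpa using this
    rw [if_pos hex]
    linarith
  · -- a = 2
    have hsubA : j.1.toFinset ⊆ A := by
      have h1 : j.1.toFinset ∩ A = j.1.toFinset := by
        apply Finset.eq_of_subset_of_card_le Finset.inter_subset_left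
        rw [fst_card hF hj]
        omega
      rw [← h1]
      exact Finset.inter_subset_right
    have hK : j.1 ∈ Kd A := fst_mem_Kd hF hj hsubA
    have hK2 : j.1 ∈ Kd (UU j ∩ A) :=
      fst_mem_Kd hF hj (Finset.subset_inter Finset.subset_union_left hsubA)
    have hsub2 : RR i ∩ RR j ⊆ (Kd (UU j ∩ A)).erase j.1 := by
      intro e he
      refine Finset.mem_erase.2 ⟨?_, hsub he⟩
      exact (Finset.mem_erase.1 (Finset.mem_inter.1 he).2).1
    have hx2 : x ≤ (2 + z).choose 2 - 1 := by
      rw [← ht, ← Kd_card, ← Finset.card_erase_of_mem hK2]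
      exact Finset.card_le_card hsub2
    have hpos : 1 ≤ (2 + z).choose 2 := Nat.choose_pos (by omega)
    rw [if_pos hK]
    suffices h3 : N ^ (s - 1 - z) * q ^ (e0 - x) ≤ c0 * q by linarith
    by_cases hzs : z = s - 1
    · -- same vertex set
      have hUe : UU j = A := by
        have h4 : UU j ∩ A = UU j := by
          apply Finset.eq_of_subset_of_card_le Finset.inter_subset_left
          rw [ht, UU_card hs hF hj]
          omega
        apply Finset.eq_of_subset_of_card_le
        · rw [← h4]; exact Finset.inter_subset_right
        · rw [hAc, UU_card hs hF hj]
      have hfne : i.1 ≠ j.1 := by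
        intro h
        apply hne
        have hj2 : j.2 = UU j \ j.1.toFinset := by
          rw [UU, Finset.union_sdiff_left, Finset.sdiff_eq_self_of_disjoint (mem_II.1 hj).2.2.2.symm]
        have hi2 : i.2 = UU i \ i.1.toFinset := by
          rw [UU, Finset.union_sdiff_left, Finset.sdiff_eq_self_of_disjoint (mem_II.1 hi).2.2.2.symm]
        apply Prod.ext h.symm
        rw [hj2, hi2, hUe, h, hA]
      have hsub3 : RR i ∩ RR j ⊆ (RR i).erase j.1 := by
        intro e he
        refine Finset.mem_erase.2 ⟨?_, (Finset.mem_inter.1 he).1⟩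
        exact (Finset.mem_erase.1 (Finset.mem_inter.1 he).2).1
      have hmem : j.1 ∈ RR i := Finset.mem_erase.2 ⟨hfne.symm, hK⟩
      have hx3 : x + 1 ≤ e0 := by
        have := Finset.card_le_card hsub3
        rw [Finset.card_erase_of_mem hmem, RR_card hs hF hi] at this
        have hp : 0 < #(RR i) := Finset.card_pos.2 ⟨_, hmem⟩
        rw [RR_card hs hF hi] at hp
        omega
      rw [hzs, Nat.sub_self, pow_zero, one_mul]
      calc q ^ (e0 - x) ≤ q ^ 1 := pow_le_pow_of_le_one h0 h1 (by omega)
        _ = 1 * q := by ring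
        _ ≤ c0 * q := mul_le_mul_of_nonneg_right hc0 h0
    · have hle' := hle (2 + z) (by omega)
      have := gen (2 + z) 1 0 (by omega) (by omega) hle' (by omega) (by omega)
      simpa using this

lemma edge_conflict (hs : 2 ≤ s) (hF : F ⊆ Kd U) {q c0 D : ℝ} (h0 : 0 ≤ q) (h1 : q ≤ 1)
    (hN : 0 < Fintype.card V) 
    (hc0 : 1 ≤ c0) (hc : (Fintype.card V : ℝ) ^ s * q ^ ((s + 1).choose 2 - 1) ≤ c0)
    (hq : ∀ t, 1 ≤ t → t ≤ s → 1 ≤ (Fintype.card V : ℝ) ^ (t - 1) * q ^ (t.choose 2))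
    (hD : ∀ v ∈ U, (#(F.filter (fun f => v ∈ f)) : ℝ) ≤ D)
    (hfin : 2 ^ (s + 1) * (#F * (c0 / (Fintype.card V : ℝ) ^ 2) +
      (s + 1) * D * (c0 / (Fintype.card V : ℝ)) + ((s + 1).choose 2) * (c0 * q)) ≤ 1 / 2)
    {i : Sym2 V × Finset V} (hi : i ∈ II F U s) :
    ∑ j ∈ II F U s with j ≠ i ∧ ¬ Disjoint (UU i) (UU j), q ^ #(RR i ∪ RR j)
      ≤ q ^ #(RR i) / 2 := by
  have hN' : (0:ℝ) < Fintype.card V := by exact_mod_cast hN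
  set N : ℝ := (Fintype.card V : ℝ) with hNdef
  set e0 := (s + 1).choose 2 - 1 with he0
  have hAc : #(UU i) = s + 1 := UU_card hs hF hi
  set b : Sym2 V → ℝ := fun f => c0 / N ^ 2 + (if ∃ v ∈ UU i, v ∈ f then c0 / N else 0) +
        (if f ∈ Kd (UU i) then c0 * q else 0) with hb
  have hbn : ∀ f, 0 ≤ b f := by
    intro f
    simp only [hb]
    split_ifs <;> positivity
  set Q := (II F U s).filter (fun j => j ≠ i ∧ ¬ Disjoint (UU i) (UU j)) with hQ
  have hsum : ∑ j ∈ Q, q ^ #(RR i ∪ RR j) ≤ ∑ f ∈ F, 2 ^ (s + 1) * (q ^ e0 * b f) := by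
    rw [← Finset.sum_fiberwise_of_maps_to (s := Q) (t := F) (g := Prod.fst)
      (fun j hj => (mem_II.1 (Finset.mem_filter.1 hj).1).1)]
    apply Finset.sum_le_sum
    intro f hf
    have e : ∑ j ∈ Q with j.1 = f, q ^ #(RR i ∪ RR j) =
        ∑ T ∈ (Q.filter (fun j => j.1 = f)).image Prod.snd, q ^ #(RR i ∪ RR (f, T)) := by
      rw [Finset.sum_image]
      · apply Finset.sum_congr rfl
        intro j hj
        rw [← (Finset.mem_filter.1 hj).2]
      · intro j hj j' hj' h
        exact Prod.ext ((Finset.mem_filter.1 hj).2.trans (Finset.mem_filter.1 hj').2.symm) h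
    rw [e, ← hAc]
    have hmem : ∀ T ∈ (Q.filter (fun j => j.1 = f)).image Prod.snd, (f, T) ∈ Q := by
      intro T hT
      obtain ⟨j, hj, rfl⟩ := Finset.mem_image.1 hT
      obtain ⟨a, rfl⟩ := Finset.mem_filter.1 hj
      exact a
    apply trace_sum hN (UU i) (s - 1) _ _ (fun T => q ^ #(RR i ∪ RR (f, T)))
    · exact mul_nonneg (by positivity) (hbn f)
    · intro T hT
      obtain ⟨x1, x2, x3⟩ := Finset.mem_filter.1 (hmem T hT)
      exact edge_local hs hF h0 h1 hN hc0 hc hq hi x1 x2 x3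
    · intro T hT
      exact (mem_II.1 (Finset.mem_filter.1 (hmem T hT)).1).2.2.1
  refine hsum.trans ?_
  rw [RR_card hs hF hi, ← he0, ← Finset.mul_sum, ← Finset.mul_sum]
  have hbsum : ∑ f ∈ F, b f ≤ #F * (c0 / N ^ 2) + (s + 1) * D * (c0 / N)
      + ((s + 1).choose 2) * (c0 * q) := by
    simp only [hb]
    rw [Finset.sum_add_distrib, Finset.sum_add_distrib, Finset.sum_const, nsmul_eq_mul,
      ← Finset.sum_filter, ← Finset.sum_filter, Finset.sum_const, Finset.sum_const, nsmul_eq_mul,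
      nsmul_eq_mul]
    have k1 : (#(F.filter (fun f => ∃ v ∈ UU i, v ∈ f)) : ℝ) ≤ (s + 1) * D := by
      have hsub : F.filter (fun f => ∃ v ∈ UU i, v ∈ f) ⊆
          (UU i).biUnion (fun v => F.filter (fun f => v ∈ f)) := by
        intro f hf
        obtain ⟨h1, v, h2, h3⟩ := Finset.mem_filter.1 hf
        exact Finset.mem_biUnion.2 ⟨v, h2, Finset.mem_filter.2 ⟨h1, h3⟩⟩
      have c1 : (#(F.filter (fun f => ∃ v ∈ UU i, v ∈ f)) : ℝ) ≤
          ((∑ v ∈ UU i, #(F.filter (fun f => v ∈ f)) : ℕ) : ℝ) := by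
        exact_mod_cast (Finset.card_le_card hsub).trans Finset.card_biUnion_le
      refine c1.trans ?_
      push_cast
      refine (Finset.sum_le_card_nsmul _ _ D (fun v hv => hD v (UU_sub hF hi hv))).trans ?_
      rw [hAc, nsmul_eq_mul]
      push_cast
      exact le_rfl
    have k2 : (#(F.filter (fun f => f ∈ Kd (UU i))) : ℝ) ≤ (s + 1).choose 2 := by
      have : #(F.filter (fun f => f ∈ Kd (UU i))) ≤ (s + 1).choose 2 := by
        rw [← hAc, ← Kd_card]
        apply Finset.card_le_card
        intro f hf
        exact (Finset.mem_filter.1 hf).2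
      exact_mod_cast this
    have := mul_le_mul_of_nonneg_right k1 (show 0 ≤ c0 / N by positivity)
    have := mul_le_mul_of_nonneg_right k2 (show 0 ≤ c0 * q by positivity)
    linarith
  have h2 := mul_le_mul_of_nonneg_left hbsum (show (0:ℝ) ≤ 2 ^ (s + 1) * q ^ e0 by positivity)
  have h3 := mul_le_mul_of_nonneg_left hfin (show (0:ℝ) ≤ q ^ e0 by positivity)
  linarith

lemma edge_pack (hs : 2 ≤ s) (hF : F ⊆ Kd U) {q c0 D : ℝ} (h0 : 0 ≤ q) (h1 : q ≤ 1)
    (hN : 0 < Fintype.card V)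
    (hc0 : 1 ≤ c0) (hc : (Fintype.card V : ℝ) ^ s * q ^ ((s + 1).choose 2 - 1) ≤ c0)
    (hq : ∀ t, 1 ≤ t → t ≤ s → 1 ≤ (Fintype.card V : ℝ) ^ (t - 1) * q ^ (t.choose 2))
    (hD : ∀ v ∈ U, (#(F.filter (fun f => v ∈ f)) : ℝ) ≤ D)
    (hfin : 2 ^ (s + 1) * (#F * (c0 / (Fintype.card V : ℝ) ^ 2) +
      (s + 1) * D * (c0 / (Fintype.card V : ℝ)) + ((s + 1).choose 2) * (c0 * q)) ≤ 1 / 2)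
    (g : ℕ) (M : ℝ) (hM : 0 < M)
    (hμ : M ≤ (#F : ℝ) * ((#U - 2).choose (s - 1) : ℝ) * q ^ ((s + 1).choose 2 - 1))
    (hg : 4 * (g : ℝ) ≤ M) :
    bex q (allE V) (fun S => if nu (II F U s) RR UU S < g then 1 else 0)
      ≤ 8 * ((s + 1).choose 2 : ℕ) / M := by
  apply packing h0 h1 _ _ _ _ _ _ _ _ _ g M hM _ hg
  · intro i _
    exact (Finset.erase_subset _ _).trans (Kd_mono (Finset.subset_univ _))
  · intro i hi
    rw [RR_card hs hF hi]
    omega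
  · intro i _ j _ h
    refine Finset.disjoint_of_subset_left (Finset.erase_subset _ _)
      (Finset.disjoint_of_subset_right (Finset.erase_subset _ _) ?_)
    rw [Finset.disjoint_iff_inter_eq_empty] at h ⊢
    rw [Kd_inter, h, ← Finset.card_eq_zero, Kd_card]
    rfl
  · intro i hi
    exact edge_conflict hs hF h0 h1 hN hc0 hc hq hD hfin hi
  · refine hμ.trans ?_
    rw [Finset.sum_congr rfl (g := fun _ => q ^ ((s + 1).choose 2 - 1)), Finset.sum_const,
      nsmul_eq_mul]
    · apply mul_le_mul_of_nonneg_right _ (by positivity)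
      exact_mod_cast II_card hF
    · intro i hi
      rw [RR_card hs hF hi]

end EdgePack

section Det

lemma Pr_eq (n : ℕ) (p : ℝ) (P : SimpleGraph (Fin n) → Prop) :
    Pr n p P = bex p (allE (Fin n))
      (fun S => if P (SimpleGraph.fromEdgeSet (S : Set (Sym2 (Fin n)))) then 1 else 0) := by
  unfold Pr bex
  refine Finset.sum_nbij' (fun H => H.edgeFinset)
    (fun S => SimpleGraph.fromEdgeSet (S : Set (Sym2 (Fin n)))) ?_ ?_ ?_ ?_ ?_
  · intro H _
    rw [Finset.mem_powerset]
    intro e he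
    rw [allE, mem_Kd]
    exact ⟨fun _ _ => Finset.mem_univ _,
      SimpleGraph.not_isDiag_of_mem_edgeSet H (SimpleGraph.mem_edgeFinset.1 he)⟩
  · intro S _
    exact Finset.mem_univ _
  · intro H _
    simp
  · intro S hS
    ext e
    simp only [SimpleGraph.mem_edgeFinset, SimpleGraph.edgeSet_fromEdgeSet]
    constructor
    · intro h; exact Finset.mem_coe.1 h.1
    · intro h
      have := Finset.mem_powerset.1 hS h
      rw [allE, mem_Kd] at this
      exact ⟨Finset.mem_coe.2 h, this.2⟩
  · intro H _
    have e1 : edgeCount H = #H.edgeFinset := by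
      rw [edgeCount, Nat.card_eq_fintype_card, SimpleGraph.edgeFinset_card]
    have e2 : #(allE (Fin n)) = n.choose 2 := by
      rw [allE, Kd_card, Finset.card_univ, Fintype.card_fin]
    have e3 : SimpleGraph.fromEdgeSet ((H.edgeFinset : Finset (Sym2 (Fin n))) : Set (Sym2 (Fin n)))
        = H := by simp
    beta_reduce
    rw [e3, e1, e2]
    split_ifs <;> simp

variable {n : ℕ}

lemma clique_of_Kd {S : Finset (Sym2 (Fin n))} {T : Finset (Fin n)} (h : Kd T ⊆ S)
    {u v : Fin n} (hu : u ∈ T) (hv : v ∈ T) (huv : u ≠ v) :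
    (SimpleGraph.fromEdgeSet (S : Set (Sym2 (Fin n)))).Adj u v := by
  rw [SimpleGraph.fromEdgeSet_adj]
  refine ⟨Finset.mem_coe.2 (h (mem_Kd.2 ⟨?_, ?_⟩)), huv⟩
  · intro w hw
    rcases Sym2.mem_iff.1 hw with rfl | rfl <;> assumption
  · simpa using huv

lemma degR_eq (G : SimpleGraph (Fin n)) (v : Fin n) : degR G v = #(G.neighborFinset v) := by
  rw [degR, Nat.card_eq_fintype_card, SimpleGraph.card_neighborSet_eq_degree,
    SimpleGraph.card_neighborFinset_eq_degree]

lemma fam_of_nu {ι : Type*} {I : Finset ι} {R : ι → Finset (Sym2 (Fin n))} {U : ι → Finset (Fin n)}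
    {S : Finset (Sym2 (Fin n))} {g s : ℕ} (hg : g ≤ nu I R U S) (X : Finset (Fin n))
    (G : SimpleGraph (Fin n))
    (h : ∀ i ∈ I, R i ⊆ S → U i ⊆ X ∧ G.IsNClique (s + 1) (U i)) :
    ∃ 𝒞 : Finset (Finset (Fin n)), 𝒞.card = g ∧ (∀ c ∈ 𝒞, G.IsNClique (s + 1) c) ∧
      (∀ c ∈ 𝒞, ∀ d ∈ 𝒞, c ≠ d → Disjoint c d) ∧ ∀ c ∈ 𝒞, c ⊆ X := by
  obtain ⟨J, hJ, he⟩ := exists_nu I R U S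
  obtain ⟨J', hJ', hc⟩ := Finset.exists_subset_card_eq (he ▸ hg)
  have hp := fun i (hi : i ∈ J') => h i (hJ.1 (hJ' hi)) (hJ.2.1 i (hJ' hi))
  refine ⟨J'.image U, ?_, ?_, ?_, ?_⟩
  · rw [Finset.card_image_of_injOn, hc]
    intro i hi j hj hij
    by_contra hne
    have hd := hJ.2.2 i (hJ' hi) j (hJ' hj) hne
    rw [← hij, disjoint_self, Finset.bot_eq_empty] at hd
    have := (hp i hi).2.card_eq
    rw [hd] at this
    simp at this
  · intro c hc
    obtain ⟨i, hi, rfl⟩ := Finset.mem_image.1 hc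
    exact (hp i hi).2
  · intro c hc d hd hne
    obtain ⟨i, hi, rfl⟩ := Finset.mem_image.1 hc
    obtain ⟨j, hj, rfl⟩ := Finset.mem_image.1 hd
    exact hJ.2.2 i (hJ' hi) j (hJ' hj) (fun h => hne (h ▸ rfl))
  · intro c hc
    obtain ⟨i, hi, rfl⟩ := Finset.mem_image.1 hc
    exact (hp i hi).1

lemma greedy (G : SimpleGraph (Fin n)) (S : Finset (Sym2 (Fin n))) {s w g : ℕ}
    (hD : DenseCl s w S) (L : Finset (Fin n)) (hL : ∀ v ∈ L, w + (s + 2) * g ≤ degR G v)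
    (𝒞₀ : Finset (Finset (Fin n))) (hg : #𝒞₀ + #L = g)
    (h1 : ∀ c ∈ 𝒞₀, (G ⊔ SimpleGraph.fromEdgeSet (S : Set (Sym2 (Fin n)))).IsNClique (s + 1) c)
    (h2 : ∀ c ∈ 𝒞₀, ∀ d ∈ 𝒞₀, c ≠ d → Disjoint c d) (h3 : ∀ c ∈ 𝒞₀, Disjoint c L) :
    ∃ 𝒞 : Finset (Finset (Fin n)), 𝒞.card = g ∧
      (∀ c ∈ 𝒞, (G ⊔ SimpleGraph.fromEdgeSet (S : Set (Sym2 (Fin n)))).IsNClique (s + 1) c) ∧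
      (𝒞 : Set (Finset (Fin n))).PairwiseDisjoint id := by
  have main : ∀ L1 : Finset (Fin n), L1 ⊆ L → ∃ 𝒞 : Finset (Finset (Fin n)),
      𝒞.card = #𝒞₀ + #L1 ∧
      (∀ c ∈ 𝒞, (G ⊔ SimpleGraph.fromEdgeSet (S : Set (Sym2 (Fin n)))).IsNClique (s + 1) c) ∧
      (∀ c ∈ 𝒞, ∀ d ∈ 𝒞, c ≠ d → Disjoint c d) ∧ ∀ c ∈ 𝒞, Disjoint c (L \ L1) := by
    intro L1
    induction L1 using Finset.induction_on with
    | empty =>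
      intro _
      exact ⟨𝒞₀, by simp, h1, h2, by simpa using h3⟩
    | insert v L1 hv ih =>
      intro hsub
      obtain ⟨𝒞, c1, c2, c3, c4⟩ := ih ((Finset.subset_insert v L1).trans hsub)
      have hvL : v ∈ L := hsub (Finset.mem_insert_self v L1)
      have hlt : #L1 + 1 ≤ #L := by
        rw [← Finset.card_insert_of_notMem hv]
        exact Finset.card_le_card hsub
      set W := G.neighborFinset v \ (L ∪ 𝒞.biUnion id) with hW
      have hb : #(𝒞.biUnion id) ≤ #𝒞 * (s + 1) :=
        Finset.card_biUnion_le_card_mul _ _ _ (fun c hc => (c2 c hc).card_eq.le)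
      have hb2 : #(L ∪ 𝒞.biUnion id) ≤ (s + 2) * g := by
        refine (Finset.card_union_le _ _).trans ?_
        have : #𝒞 ≤ g := by omega
        have := Nat.mul_le_mul_right (s + 1) this
        nlinarith
      have hWc : w ≤ #W := by
        have a : #(G.neighborFinset v) - #(L ∪ 𝒞.biUnion id) ≤ #W :=
          Finset.le_card_sdiff (L ∪ 𝒞.biUnion id) (G.neighborFinset v)
        have b := hL v hvL
        rw [degR_eq] at b
        omega
      obtain ⟨T, hTW, hTc, hTS⟩ := hD W hWc
      have hTn : ∀ x ∈ T, G.Adj v x ∧ x ∉ L ∧ ∀ c ∈ 𝒞, x ∉ c := by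
        intro x hx
        obtain ⟨y1, y2⟩ := Finset.mem_sdiff.1 (hTW hx)
        rw [Finset.mem_union, not_or] at y2
        refine ⟨(SimpleGraph.mem_neighborFinset _ _ _).1 y1, y2.1, fun c hc hxc => y2.2 ?_⟩
        exact Finset.mem_biUnion.2 ⟨c, hc, hxc⟩
      have hvT : v ∉ T := fun h => (hTn v h).1.ne rfl
      have hvC : ∀ c ∈ 𝒞, v ∉ c := fun c hc hvc =>
        Finset.disjoint_left.1 (c4 c hc) hvc (Finset.mem_sdiff.2 ⟨hvL, hv⟩)
      have hdis : ∀ c ∈ 𝒞, Disjoint (insert v T) c := by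
        intro c hc
        rw [Finset.disjoint_left]
        intro x hx
        rcases Finset.mem_insert.1 hx with rfl | hx
        · exact hvC c hc
        · exact (hTn x hx).2.2 c hc
      have hnew : insert v T ∉ 𝒞 := fun h => hvC _ h (Finset.mem_insert_self v T)
      refine ⟨insert (insert v T) 𝒞, ?_, ?_, ?_, ?_⟩
      · rw [Finset.card_insert_of_notMem hnew, Finset.card_insert_of_notMem hv, c1]
        ring
      · intro c hc
        rcases Finset.mem_insert.1 hc with rfl | hc
        · rw [SimpleGraph.isNClique_iff]
          refine ⟨?_, by rw [Finset.card_insert_of_notMem hvT, hTc]⟩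
          intro x hx y hy hxy
          rw [SimpleGraph.sup_adj]
          rcases Finset.mem_insert.1 (Finset.mem_coe.1 hx) with hx1 | hx1
          · rcases Finset.mem_insert.1 (Finset.mem_coe.1 hy) with hy1 | hy1
            · exact absurd (hx1.trans hy1.symm) hxy
            · rw [hx1]; exact Or.inl (hTn y hy1).1
          · rcases Finset.mem_insert.1 (Finset.mem_coe.1 hy) with hy1 | hy1
            · rw [hy1]; exact Or.inl (hTn x hx1).1.symm
            · exact Or.inr (clique_of_Kd hTS hx1 hy1 hxy)
        · exact c2 c hc
      · intro c hc d hd hne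
        rcases Finset.mem_insert.1 hc with rfl | hc
        · rcases Finset.mem_insert.1 hd with rfl | hd
          · exact absurd rfl hne
          · exact hdis d hd
        · rcases Finset.mem_insert.1 hd with rfl | hd
          · exact (hdis c hc).symm
          · exact c3 c hc d hd hne
      · intro c hc
        rcases Finset.mem_insert.1 hc with rfl | hc
        · rw [Finset.disjoint_left]
          intro x hx hx2
          obtain ⟨z1, z2⟩ := Finset.mem_sdiff.1 hx2
          rcases Finset.mem_insert.1 hx with rfl | hx
          · exact z2 (Finset.mem_insert_self _ _)
          · exact (hTn x hx).2.1 z1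
        · exact Finset.disjoint_of_subset_right
            (Finset.sdiff_subset_sdiff (Finset.Subset.refl _) (Finset.subset_insert _ _)) (c4 c hc)
  obtain ⟨𝒞, c1, c2, c3, _⟩ := main L (Finset.Subset.refl _)
  exact ⟨𝒞, by omega, c2, fun c hc d hd hne => c3 c hc d hd hne⟩

/-- Choosing the edge set `F`. -/
lemma exists_F (G : SimpleGraph (Fin n)) (L : Finset (Fin n)) {g' m : ℕ} {D : ℝ}
    (hdeg : ∀ v, g' + #L ≤ degR G v) (hmax : ∀ v, v ∉ L → (degR G v : ℝ) ≤ D)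
    (hm : 2 * m ≤ #(Finset.univ \ L) * g') :
    ∃ F : Finset (Sym2 (Fin n)), F ⊆ Kd (Finset.univ \ L) ∧ F ⊆ G.edgeFinset ∧ #F = m ∧
      ∀ v ∈ Finset.univ \ L, (#(F.filter (fun f => v ∈ f)) : ℝ) ≤ D := by
  let U : Finset (Fin n) := Finset.univ \ L
  let G' : SimpleGraph (Fin n) :=
    { Adj := fun u v => G.Adj u v ∧ u ∈ U ∧ v ∈ U
      symm := ⟨fun u v h => ⟨h.1.symm, h.2.2, h.2.1⟩⟩
      loopless := ⟨fun u h => h.1.ne rfl⟩ }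
  have hd : ∀ v ∈ U, g' ≤ G'.degree v := by
    intro v hv
    have hsub : G.neighborFinset v \ L ⊆ G'.neighborFinset v := by
      intro x hx
      obtain ⟨a, b⟩ := Finset.mem_sdiff.1 hx
      rw [SimpleGraph.mem_neighborFinset] at a ⊢
      exact ⟨a, hv, Finset.mem_sdiff.2 ⟨Finset.mem_univ _, b⟩⟩
    have h1 := Finset.card_le_card hsub
    have h2 := Finset.le_card_sdiff L (G.neighborFinset v)
    have h3 := hdeg v
    rw [degR_eq] at h3
    rw [SimpleGraph.card_neighborFinset_eq_degree G'] at h1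
    omega
  have hE : m ≤ #G'.edgeFinset := by
    have h1 := G'.sum_degrees_eq_twice_card_edges
    have h2 : #U * g' ≤ ∑ v, G'.degree v := by
      calc #U * g' = ∑ v ∈ U, g' := by rw [Finset.sum_const, smul_eq_mul]
        _ ≤ ∑ v ∈ U, G'.degree v := Finset.sum_le_sum hd
        _ ≤ _ := Finset.sum_le_sum_of_subset (Finset.subset_univ U)
    have : #U = #(Finset.univ \ L) := rfl
    rw [← this] at hm
    omega
  obtain ⟨F, hF, hFc⟩ := Finset.exists_subset_card_eq hE
  have hFG : F ⊆ G.edgeFinset := by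
    intro e he
    have := hF he
    rw [SimpleGraph.mem_edgeFinset] at this ⊢
    induction e using Sym2.ind with
    | _ x y => exact (SimpleGraph.mem_edgeSet _).2 ((SimpleGraph.mem_edgeSet _).1 this).1
  refine ⟨F, ?_, hFG, hFc, ?_⟩
  · intro e he
    have := hF he
    rw [SimpleGraph.mem_edgeFinset] at this
    induction e using Sym2.ind with
    | _ x y =>
      have hA := (SimpleGraph.mem_edgeSet _).1 this
      rw [mem_Kd]
      refine ⟨?_, ?_⟩
      · intro w hw
        rcases Sym2.mem_iff.1 hw with rfl | rfl
        · exact hA.2.1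
        · exact hA.2.2
      · simpa using hA.1.ne
  · intro v hv
    have hvL : v ∉ L := (Finset.mem_sdiff.1 hv).2
    refine le_trans ?_ (hmax v hvL)
    have : #(F.filter (fun f => v ∈ f)) ≤ degR G v := by
      rw [degR_eq, SimpleGraph.card_neighborFinset_eq_degree,
        ← SimpleGraph.card_incidenceFinset_eq_degree]
      apply Finset.card_le_card
      intro e he
      obtain ⟨a, b⟩ := Finset.mem_filter.1 he
      rw [SimpleGraph.mem_incidenceFinset]
      exact ⟨SimpleGraph.mem_edgeFinset.1 (hFG a), b⟩
    exact_mod_cast this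

end Det

section Final

variable {n : ℕ}

lemma combine (G : SimpleGraph (Fin n)) {s w g g' : ℕ} {p δ : ℝ} (h0 : 0 ≤ p) (h1 : p ≤ 1)
    (hdense : bex p (allE (Fin n)) (fun S => if DenseCl s w S then 0 else 1) ≤ δ / 2)
    (L : Finset (Fin n)) (hL : ∀ v ∈ L, w + (s + 2) * g ≤ degR G v) (hg : g' + #L = g)
    {ι : Type*} (I : Finset ι) (R : ι → Finset (Sym2 (Fin n))) (U : ι → Finset (Fin n))
    (hnu : bex p (allE (Fin n)) (fun S => if nu I R U S < g' then 1 else 0) ≤ δ / 2)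
    (hI : ∀ S : Finset (Sym2 (Fin n)), ∀ i ∈ I, R i ⊆ S → U i ⊆ Finset.univ \ L ∧
      (G ⊔ SimpleGraph.fromEdgeSet (S : Set (Sym2 (Fin n)))).IsNClique (s + 1) (U i)) :
    1 - δ ≤ Pr n p (fun H => ∃ 𝒞 : Finset (Finset (Fin n)), 𝒞.card = g ∧
                (∀ c ∈ 𝒞, (G ⊔ H).IsNClique (s + 1) c) ∧
                (𝒞 : Set (Finset (Fin n))).PairwiseDisjoint id) := by
  rw [Pr_eq]
  have start : 1 - δ ≤ bex p (allE (Fin n)) (fun S => (1 - (if DenseCl s w S then 0 else 1)) -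
      (if nu I R U S < g' then 1 else 0)) := by
    rw [bex_sub, bex_sub, bex_const]
    linarith
  refine start.trans (bex_mono h0 h1 ?_)
  intro S _
  by_cases hD : DenseCl s w S
  · by_cases hn : nu I R U S < g'
    · rw [if_pos hD, if_pos hn]
      split_ifs <;> norm_num
    · obtain ⟨𝒞, c1, c2, c3, c4⟩ := fam_of_nu (not_lt.1 hn) (Finset.univ \ L) _ (hI S)
      have := greedy G S hD L hL 𝒞 (by omega) c2 c3
        (fun c hc => Finset.disjoint_of_subset_left (c4 c hc) Finset.sdiff_disjoint)
      rw [if_pos this, if_pos hD, if_neg hn]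
      norm_num
  · rw [if_neg hD]
    split_ifs <;> norm_num

lemma II_clique (hs : 2 ≤ s) {U : Finset (Fin n)} {F : Finset (Sym2 (Fin n))} (hF : F ⊆ Kd U)
    (G : SimpleGraph (Fin n)) (hFG : F ⊆ G.edgeFinset) (S : Finset (Sym2 (Fin n)))
    {i : Sym2 (Fin n) × Finset (Fin n)} (hi : i ∈ II F U s) (hR : RR i ⊆ S) :
    (G ⊔ SimpleGraph.fromEdgeSet (S : Set (Sym2 (Fin n)))).IsNClique (s + 1) (UU i) := by
  rw [SimpleGraph.isNClique_iff]
  refine ⟨?_, UU_card hs hF hi⟩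
  intro x hx y hy hxy
  rw [SimpleGraph.sup_adj]
  by_cases he : s(x, y) = i.1
  · left
    have := hFG (mem_II.1 hi).1
    rw [SimpleGraph.mem_edgeFinset, ← he] at this
    exact this
  · right
    rw [SimpleGraph.fromEdgeSet_adj]
    refine ⟨Finset.mem_coe.2 (hR (Finset.mem_erase.2 ⟨he, mem_Kd.2 ⟨?_, ?_⟩⟩)), hxy⟩
    · intro w hw
      rcases Sym2.mem_iff.1 hw with rfl | rfl <;> assumption
    · simpa using hxy

set_option maxHeartbeats 1000000 in
lemma main_case {s : ℕ} (hs : 2 ≤ s) (hn : 2 ≤ n) {w g0 : ℕ} {p q c0 η β δ : ℝ}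
    (h0 : 0 ≤ p) (h1 : p ≤ 1) (hq0 : 0 ≤ q) (hqp : q ≤ p) (hδ : 0 < δ)
    (hβ : 0 ≤ β) (hβ4 : β ≤ 1 / 4) (hη : 0 ≤ η)
    (hsm : (n : ℝ) ^ 2 * p ^ (s + 1) ≤ (1 / (2 * 2 ^ (s + 1))) ^ 2)
    (hdense : 4 * (n : ℝ) ≤ (w.choose s : ℝ) * p ^ (s.choose 2))
    (hexp : Real.exp (-(n : ℝ)) ≤ δ / 2)
    (hw : (w : ℝ) ≤ η / 2 * n) (hηβ : (s + 2) * β ≤ η / 2)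
    (hg0 : 0 < g0) (hg0' : 4 * ((s + 1).choose 2 : ℝ) ≤ δ * g0)
    (hrand : ∀ u : ℕ, n ≤ 2 * u → 4 * (g0 : ℝ) ≤ (u.choose (s + 1) : ℝ) * p ^ ((s + 1).choose 2))
    (hedge : ∀ u : ℕ, n ≤ 2 * u →
      32 ≤ (n : ℝ) * ((u - 2).choose (s - 1) : ℝ) * q ^ ((s + 1).choose 2 - 1))
    (hc0 : 1 ≤ c0) (hc : (n : ℝ) ^ s * q ^ ((s + 1).choose 2 - 1) ≤ c0)
    (hq : ∀ t, 1 ≤ t → t ≤ s → 1 ≤ (n : ℝ) ^ (t - 1) * q ^ (t.choose 2))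
    (hfin : 2 ^ (s + 1) * (β * c0 + (s + 1) * η * c0 + ((s + 1).choose 2) * (c0 * q)) ≤ 1 / 2)
    {g : ℕ} (hg : (g : ℝ) ≤ β * n) (G : SimpleGraph (Fin n)) (hG : ∀ v, g ≤ degR G v) :
    1 - δ ≤ Pr n p (fun H => ∃ 𝒞 : Finset (Finset (Fin n)), 𝒞.card = g ∧
                (∀ c ∈ 𝒞, (G ⊔ H).IsNClique (s + 1) c) ∧
                (𝒞 : Set (Finset (Fin n))).PairwiseDisjoint id) := by
  have hn0 : (0 : ℝ) < n := by exact_mod_cast (by omega : 0 < n)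
  have hV : 0 < Fintype.card (Fin n) := by rw [Fintype.card_fin]; omega
  have hsm' : (n : ℝ) ^ 2 * p ^ (s + 1) ≤ (1 / (2 * 2 ^ s)) ^ 2 := by
    refine hsm.trans ?_
    have : (2 : ℝ) ^ s ≤ 2 ^ (s + 1) := pow_le_pow_right₀ (by norm_num) (by omega)
    gcongr
  have hd : bex p (allE (Fin n)) (fun S => if DenseCl s w S then 0 else 1) ≤ δ / 2 := by
    refine (dense_prob hV h0 h1 (by rw [Fintype.card_fin]; exact hsm')
      (by rw [Fintype.card_fin]; exact hdense)).trans ?_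
    rw [Fintype.card_fin]; exact hexp
  set LA : Finset (Fin n) := Finset.univ.filter (fun v => w + (s + 2) * g ≤ degR G v) with hLA
  by_cases hcase : g ≤ #LA
  · obtain ⟨L, hL, hLc⟩ := Finset.exists_subset_card_eq hcase
    refine combine (g' := 0) G h0 h1 hd L (fun v hv => (Finset.mem_filter.1 (hL hv)).2) (by omega)
      (∅ : Finset ℕ) (fun _ => ∅) (fun _ => ∅) ?_ (by simp)
    simp only [Nat.not_lt_zero, if_false]
    rw [bex_const]
    positivity
  push Not at hcase
  obtain ⟨g', hg'⟩ : ∃ g', g' + #LA = g := ⟨g - #LA, by omega⟩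
  set U : Finset (Fin n) := Finset.univ \ LA with hU
  have hUc : #U + #LA = n := by
    rw [hU, Finset.card_sdiff_of_subset (Finset.subset_univ _), Finset.card_univ, Fintype.card_fin]
    have : #LA ≤ n := by
      simpa using Finset.card_le_univ LA
    omega
  have hU2 : n ≤ 2 * #U := by
    have a : (g : ℝ) ≤ n / 4 := hg.trans (by nlinarith)
    have b : (#LA : ℝ) < g := by exact_mod_cast hcase
    have c : (#U : ℝ) + #LA = n := by exact_mod_cast hUc
    have : (n : ℝ) ≤ 2 * #U := by linarith
    exact_mod_cast this
  have hLm : ∀ v ∈ LA, w + (s + 2) * g ≤ degR G v := fun v hv => (Finset.mem_filter.1 hv).2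
  have hK : (0 : ℝ) ≤ ((s + 1).choose 2 : ℝ) := by positivity
  have hg0R : (0 : ℝ) < g0 := by exact_mod_cast hg0
  by_cases hsmall : g' < g0
  · refine combine (g' := g') G h0 h1 hd LA hLm hg' (Finset.powersetCard (s + 1) U) Kd id ?_ ?_
    · have := rand_pack hV h0 h1 (by rw [Fintype.card_fin]; exact hsm) U (4 * g0)
        (by positivity) (hrand _ hU2) g' (by
          have : (g' : ℝ) ≤ g0 := by exact_mod_cast hsmall.le
          linarith)
      refine this.trans ?_
      rw [div_le_iff₀ (by positivity)]
      linarith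
    · intro S T hT hTS
      obtain ⟨a, b⟩ := Finset.mem_powersetCard.1 hT
      refine ⟨a, ?_⟩
      rw [SimpleGraph.isNClique_iff]
      refine ⟨?_, b⟩
      intro x hx y hy hxy
      exact Or.inr (clique_of_Kd hTS hx hy hxy)
  push Not at hsmall
  have hg'1 : 1 ≤ g' := by omega
  have hUg : 2 ≤ #U * g' ∨ #U * g' = 1 := by
    have : 1 ≤ #U * g' := Nat.mul_pos (by omega) hg'1
    omega
  obtain ⟨F, hF, hFG, hFc, hFD⟩ := exists_F (g' := g') (m := (#U * g') / 2) (D := η * n) G LA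
    (fun v => by have := hG v; omega) (by
      intro v hv
      have h2 : ¬ (w + (s + 2) * g ≤ degR G v) := by simpa [hLA] using hv
      have h3 : (degR G v : ℝ) ≤ w + (s + 2) * g := by exact_mod_cast (not_le.1 h2).le
      have h4 : ((s : ℝ) + 2) * g ≤ η / 2 * n := by
        calc ((s : ℝ) + 2) * g ≤ (s + 2) * (β * n) := by gcongr
          _ = ((s + 2) * β) * n := by ring
          _ ≤ _ := by gcongr
      linarith) (by rw [← hU]; omega)
  have hFl : (n : ℝ) * g' / 8 ≤ #F := by
    have a1 : #U * g' ≤ 4 * #F ∨ #U * g' = 1 := by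
      rw [hFc]; omega
    have a2 : n * g' ≤ 2 * (#U * g') := by nlinarith
    have a3 : n * g' ≤ 8 * #F := by
      rcases a1 with h | h
      · omega
      · exfalso
        have u1 : #U = 1 := Nat.eq_one_of_mul_eq_one_right h
        have u2 : g' = 1 := Nat.eq_one_of_mul_eq_one_left h
        have b1 : (1 : ℝ) ≤ g := by exact_mod_cast (by omega : 1 ≤ g)
        have b2 : (n : ℝ) ≤ 2 := by exact_mod_cast (by omega : n ≤ 2)
        nlinarith
    have : (n : ℝ) * g' ≤ 8 * #F := by exact_mod_cast a3
    linarith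
  have hFu : (#F : ℝ) ≤ β * n ^ 2 := by
    have a1 : #F ≤ n * g := by
      rw [hFc]
      have : #U * g' ≤ n * g := Nat.mul_le_mul (by omega) (by omega)
      omega
    have a2 : (#F : ℝ) ≤ n * g := by exact_mod_cast a1
    nlinarith
  refine combine (g' := g') G h0 h1 hd LA hLm hg' (II F U s) RR UU ?_ ?_
  · have h1q : q ≤ 1 := hqp.trans h1
    have hg'R : (0 : ℝ) < g' := by exact_mod_cast hg'1
    have E := edge_pack (c0 := c0) (D := η * n) hs hF hq0 h1q hV hc0
      (by rw [Fintype.card_fin]; exact hc)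
      (by rw [Fintype.card_fin]; exact hq) hFD (by
        rw [Fintype.card_fin]
        refine le_trans ?_ hfin
        have e1 : (#F : ℝ) * (c0 / (n : ℝ) ^ 2) ≤ β * c0 := by
          rw [mul_div_assoc', div_le_iff₀ (by positivity)]
          calc (#F : ℝ) * c0 ≤ (β * n ^ 2) * c0 := by gcongr
            _ = β * c0 * n ^ 2 := by ring
        have e2 : ((s : ℝ) + 1) * (η * n) * (c0 / n) = (s + 1) * η * c0 := by
          field_simp
        rw [e2]
        gcongr) g' (4 * g') (by positivity) (by
          have := hedge _ hU2
          calc 4 * (g' : ℝ) = (g' / 8) * 32 := by ring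
            _ ≤ (g' / 8) * ((n : ℝ) * ((#U - 2).choose (s - 1) : ℝ) * q ^ ((s + 1).choose 2 - 1)) := by
              gcongr
            _ = ((n : ℝ) * g' / 8) * ((#U - 2).choose (s - 1) : ℝ) * q ^ ((s + 1).choose 2 - 1) := by
              ring
            _ ≤ _ := by gcongr) le_rfl
    have T : bex q (allE (Fin n)) (fun S => 1 - (if nu (II F U s) RR UU S < g' then 1 else 0)) ≤
        bex p (allE (Fin n)) (fun S => 1 - (if nu (II F U s) RR UU S < g' then 1 else 0)) := by
      apply bex_mono_p hq0 hqp h1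
      intro S T hST
      have := nu_mono (II F U s) RR UU hST
      dsimp only
      split_ifs with a b <;> first | omega | norm_num
    rw [bex_sub, bex_sub, bex_const, bex_const] at T
    have E2 : 8 * ((s + 1).choose 2 : ℝ) / (4 * g') ≤ δ / 2 := by
      rw [div_le_iff₀ (by positivity)]
      have : (g0 : ℝ) ≤ g' := by exact_mod_cast hsmall
      nlinarith
    linarith
  · intro S i hi hR
    exact ⟨UU_sub hF hi, II_clique hs hF G hFG S hi hR⟩

end Final
section Asym

open Filter Topology

/-- The exponent `φ(s)`. -/
noncomputable def phi (s : ℕ) : ℝ := 2 * (s : ℝ) / (((s : ℝ) - 1) * ((s : ℝ) + 2))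

lemma phi_pos {s : ℕ} (hs : 2 ≤ s) : 0 < phi s := by
  have : (2 : ℝ) ≤ s := by exact_mod_cast hs
  unfold phi
  have : 0 < (s : ℝ) - 1 := by linarith
  positivity

lemma phi_two : phi 2 = 1 := by norm_num [phi]

lemma phi_s {s : ℕ} (hs : 2 ≤ s) : phi s * s ≤ 2 := by
  have h : (2 : ℝ) ≤ s := by exact_mod_cast hs
  have : 0 < (s : ℝ) - 1 := by linarith
  unfold phi
  rw [div_mul_eq_mul_div, div_le_iff₀ (by positivity)]
  nlinarith

lemma phi_s_lt {s : ℕ} (hs : 3 ≤ s) : phi s * s < 2 := by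
  have h : (3 : ℝ) ≤ s := by exact_mod_cast hs
  have : 0 < (s : ℝ) - 1 := by linarith
  unfold phi
  rw [div_mul_eq_mul_div, div_lt_iff₀ (by positivity)]
  nlinarith

lemma phi_s1 {s : ℕ} (hs : 2 ≤ s) : 2 < phi s * (s + 1) := by
  have h : (2 : ℝ) ≤ s := by exact_mod_cast hs
  have : 0 < (s : ℝ) - 1 := by linarith
  unfold phi
  rw [div_mul_eq_mul_div, lt_div_iff₀ (by positivity)]
  nlinarith

lemma phi_e {s : ℕ} (hs : 2 ≤ s) : phi s * (((s + 1).choose 2 - 1 : ℕ) : ℝ) = s := by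
  have h : (2 : ℝ) ≤ s := by exact_mod_cast hs
  have h1 : (s : ℝ) - 1 ≠ 0 := by linarith
  have h2 : (s : ℝ) + 2 ≠ 0 := by linarith
  have e : (((s + 1).choose 2 - 1 : ℕ) : ℝ) = ((s : ℝ) - 1) * (s + 2) / 2 := by
    have a := two_choose (s + 1)
    have b : 1 ≤ (s + 1).choose 2 := Nat.choose_pos (by omega)
    rw [Nat.cast_sub b]
    have a' : 2 * ((s + 1).choose 2 : ℝ) = (s + 1) * s := by
      rw [Nat.add_sub_cancel] at a
      exact_mod_cast a
    push_cast
    linarith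
  rw [e, phi]
  field_simp

lemma nat_rpow_mul {n : ℕ} (hn : 0 < n) (a : ℝ) (j k : ℕ) :
    (n : ℝ) ^ j * ((n : ℝ) ^ (-a)) ^ k = (n : ℝ) ^ ((j : ℝ) - a * k) := by
  have : (0 : ℝ) < n := by exact_mod_cast hn
  rw [← Real.rpow_natCast ((n : ℝ) ^ (-a)) k, ← Real.rpow_mul this.le, ← Real.rpow_natCast (n : ℝ) j,
    ← Real.rpow_add this]
  congr 1
  ring

lemma pThr_of_ne {s n : ℕ} (hs : s ≠ 2) : pThr s n = (n : ℝ) ^ (-phi s) := by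
  rw [pThr, if_neg hs, phi, neg_div]

lemma pThr_two (n : ℕ) : pThr 2 n = Real.log n / n := by
  rw [pThr, if_pos rfl]

lemma tendsto_nat_rpow_neg {a : ℝ} (ha : 0 < a) :
    Tendsto (fun n : ℕ => (n : ℝ) ^ (-a)) atTop (𝓝 0) :=
  (tendsto_rpow_neg_atTop ha).comp tendsto_natCast_atTop_atTop

lemma tendsto_nat_rpow {a : ℝ} (ha : 0 < a) :
    Tendsto (fun n : ℕ => (n : ℝ) ^ a) atTop atTop :=
  (tendsto_rpow_atTop ha).comp tendsto_natCast_atTop_atTop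

lemma logpow_div (k : ℕ) : Tendsto (fun n : ℕ => Real.log n ^ k / n) atTop (𝓝 0) := by
  have := (Real.isLittleO_pow_log_id_atTop (n := k)).tendsto_div_nhds_zero
  exact this.comp tendsto_natCast_atTop_atTop

lemma pThr_nonneg (s n : ℕ) : 0 ≤ pThr s n := by
  by_cases h : s = 2
  · subst h; rw [pThr_two]
    exact div_nonneg (Real.log_natCast_nonneg n) (by positivity)
  · rw [pThr_of_ne h]; positivity

lemma le_pThr {s n : ℕ} (hn : 3 ≤ n) : (n : ℝ) ^ (-phi s) ≤ pThr s n := by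
  by_cases h : s = 2
  · subst h; rw [pThr_two, phi_two, Real.rpow_neg_one, ← one_div]
    have h3 : (3 : ℝ) ≤ n := by exact_mod_cast hn
    have : 1 ≤ Real.log n := by
      rw [Real.le_log_iff_exp_le (by linarith)]
      exact (Real.exp_one_lt_d9.le.trans (by norm_num)).trans h3
    gcongr
  · rw [pThr_of_ne h]

lemma asym0 {s : ℕ} (hs : 2 ≤ s) : Tendsto (fun n : ℕ => pThr s n) atTop (𝓝 0) := by
  by_cases h : s = 2
  · subst h
    simpa [pThr_two] using logpow_div 1
  · simp only [pThr_of_ne h]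
    exact tendsto_nat_rpow_neg (phi_pos hs)

lemma asym1 {s : ℕ} (hs : 2 ≤ s) :
    Tendsto (fun n : ℕ => (n : ℝ) ^ 2 * pThr s n ^ s) atTop atTop := by
  by_cases h : s = 2
  · subst h
    have : Tendsto (fun n : ℕ => Real.log n ^ 2) atTop atTop :=
      (tendsto_pow_atTop (by norm_num)).comp
        (Real.tendsto_log_atTop.comp tendsto_natCast_atTop_atTop)
    refine this.congr' ?_
    filter_upwards [eventually_gt_atTop 0] with n hn
    have : (n : ℝ) ≠ 0 := by exact_mod_cast hn.ne'
    rw [pThr_two]; field_simp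
  · have h3 : 3 ≤ s := by omega
    have := phi_s_lt h3
    refine (tendsto_nat_rpow (a := ((2 : ℕ) : ℝ) - phi s * s) (by push_cast; linarith)).congr' ?_
    filter_upwards [eventually_gt_atTop 0] with n hn
    rw [pThr_of_ne h, nat_rpow_mul hn]

lemma asym2 {s : ℕ} (hs : 2 ≤ s) :
    Tendsto (fun n : ℕ => (n : ℝ) ^ 2 * pThr s n ^ (s + 1)) atTop (𝓝 0) := by
  by_cases h : s = 2
  · subst h
    refine (logpow_div 3).congr' ?_
    filter_upwards [eventually_gt_atTop 0] with n hn
    have : (n : ℝ) ≠ 0 := by exact_mod_cast hn.ne'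
    rw [pThr_two, div_pow]; field_simp; ring
  · have := phi_s1 hs
    refine (tendsto_nat_rpow_neg (a := phi s * (s + 1) - 2) (by linarith)).congr' ?_
    filter_upwards [eventually_gt_atTop 0] with n hn
    rw [pThr_of_ne h, nat_rpow_mul hn]
    congr 1
    push_cast
    ring

/-- A lower bound for binomial coefficients. -/
lemma choose_lb {a k : ℕ} {x : ℝ} (hx : 0 ≤ x) (h : x + k ≤ a + 1) :
    x ^ k / (k.factorial : ℝ) ≤ (a.choose k : ℝ) := by
  have h1 : ((a + 1 - k : ℕ) : ℝ) ^ k / (k.factorial : ℝ) ≤ (a.choose k : ℝ) :=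
    Nat.pow_le_choose k a
  have h2 : x ≤ ((a + 1 - k : ℕ) : ℝ) := by
    have : k ≤ a + 1 := by
      have : (k : ℝ) ≤ a + 1 := by linarith
      exact_mod_cast this
    rw [Nat.cast_sub this]
    push_cast
    linarith
  refine le_trans ?_ h1
  gcongr

lemma dense_num {s : ℕ} (hs : 2 ≤ s) {n w : ℕ} {p η m : ℝ} (h0 : 0 ≤ p) (hη : 0 < η) (hm : 1 ≤ m)
    (hm1 : 4 * (s.factorial : ℝ) / (η / 4) ^ s ≤ m) (h : m ^ 2 ≤ (n : ℝ) ^ 2 * p ^ s)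
    (hw : η / 4 * n + s ≤ w + 1) : 4 * (n : ℝ) ≤ (w.choose s : ℝ) * p ^ (s.choose 2) := by
  have a := choose_lb (x := η / 4 * n) (by positivity) hw
  have b := pow_large h0 hm (k := s - 1) (e := s.choose 2) (by omega) h (two_choose s)
  have hf : (0 : ℝ) < s.factorial := by exact_mod_cast s.factorial_pos
  have e : (n : ℝ) ^ s = n * (n : ℝ) ^ (s - 1) := by
    rw [← pow_succ', Nat.sub_add_cancel (by omega)]
  have hm2 : 4 * (s.factorial : ℝ) ≤ m * (η / 4) ^ s := (div_le_iff₀ (by positivity)).1 hm1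
  calc 4 * (n : ℝ) = n / s.factorial * (4 * s.factorial) := by field_simp
    _ ≤ n / s.factorial * (m * (η / 4) ^ s) := by gcongr
    _ ≤ n / s.factorial * (((n : ℝ) ^ (s - 1) * p ^ (s.choose 2)) * (η / 4) ^ s) := by gcongr
    _ = (η / 4 * n) ^ s / s.factorial * p ^ (s.choose 2) := by
      rw [mul_pow, e]; ring
    _ ≤ _ := by gcongr

lemma rand_num {s : ℕ} {n u : ℕ} {p m B : ℝ} (h0 : 0 ≤ p) (hm : 1 ≤ m)
    (hm1 : B * ((s + 1).factorial : ℝ) * 4 ^ (s + 1) ≤ m) (h : m ^ 2 ≤ (n : ℝ) ^ 2 * p ^ s)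
    (hu : (n : ℝ) / 4 + (s + 1) ≤ u + 1) :
    B ≤ (u.choose (s + 1) : ℝ) * p ^ ((s + 1).choose 2) := by
  have a := choose_lb (a := u) (k := s + 1) (x := (n : ℝ) / 4) (by positivity)
    (by push_cast; exact hu)
  have b := pow_large h0 hm (k := s + 1) (e := (s + 1).choose 2) (by omega) h
    (by rw [two_choose, Nat.add_sub_cancel, mul_comm])
  have hf : (0 : ℝ) < (s + 1).factorial := by exact_mod_cast (s + 1).factorial_pos
  have c := hm1.trans b
  calc B = (B * ((s + 1).factorial : ℝ) * 4 ^ (s + 1)) / ((s + 1).factorial * 4 ^ (s + 1)) := by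
        field_simp
    _ ≤ ((n : ℝ) ^ (s + 1) * p ^ ((s + 1).choose 2)) / ((s + 1).factorial * 4 ^ (s + 1)) := by
        gcongr
    _ = ((n : ℝ) / 4) ^ (s + 1) / (s + 1).factorial * p ^ ((s + 1).choose 2) := by
        rw [div_pow]; field_simp
    _ ≤ _ := by gcongr

lemma edge_num {s : ℕ} (hs : 2 ≤ s) {n u e : ℕ} {q : ℝ} (h0 : 0 ≤ q)
    (h : 32 * 4 ^ (s - 1) * ((s - 1).factorial : ℝ) ≤ (n : ℝ) ^ s * q ^ e)
    (hn : 4 * s ≤ n) (hu : n ≤ 2 * u) :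
    32 ≤ (n : ℝ) * ((u - 2).choose (s - 1) : ℝ) * q ^ e := by
  have hN : (4 : ℝ) * s ≤ n := by exact_mod_cast hn
  have hU : (n : ℝ) ≤ 2 * u := by exact_mod_cast hu
  have a := choose_lb (a := u - 2) (k := s - 1) (x := (n : ℝ) / 4) (by positivity) (by
    rw [Nat.cast_sub (by omega), Nat.cast_sub (by omega)]
    push_cast
    linarith)
  have hf : (0 : ℝ) < (s - 1).factorial := by exact_mod_cast (s - 1).factorial_pos
  have en : (n : ℝ) ^ s = n * (n : ℝ) ^ (s - 1) := by
    rw [← pow_succ', Nat.sub_add_cancel (by omega)]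
  calc (32 : ℝ) = (32 * 4 ^ (s - 1) * ((s - 1).factorial : ℝ)) / (4 ^ (s - 1) * (s - 1).factorial) := by
        field_simp
    _ ≤ ((n : ℝ) ^ s * q ^ e) / (4 ^ (s - 1) * (s - 1).factorial) := by gcongr
    _ = n * (((n : ℝ) / 4) ^ (s - 1) / (s - 1).factorial) * q ^ e := by
        rw [div_pow, en]; field_simp
    _ ≤ _ := by gcongr

end Asym

/-- Lemma 4.4: for every `s ≥ 2` there are `β, C > 0` such that whenever
`g ≤ β n` and `G` is an `n`-vertex graph of minimum degree at least `g`, w.h.p. the graph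
`G ∪ G_{n,p}` with `p = C ⬝ p_s(n)` contains `g` vertex-disjoint copies of `K_{s+1}`. -/
theorem statement6 (s : ℕ) (hs : 2 ≤ s) :
    ∃ β C : ℝ, 0 < β ∧ 0 < C ∧
      ∀ δ : ℝ, 0 < δ → ∃ n₀ : ℕ, ∀ n : ℕ, n₀ ≤ n →
        ∀ g : ℕ, (g : ℝ) ≤ β * n →
          ∀ G : SimpleGraph (Fin n), (∀ v, g ≤ degR G v) →
            1 - δ ≤ Pr n (C * pThr s n)
              (fun H => ∃ 𝒞 : Finset (Finset (Fin n)), 𝒞.card = g ∧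
                (∀ c ∈ 𝒞, (G ⊔ H).IsNClique (s + 1) c) ∧
                (𝒞 : Set (Finset (Fin n))).PairwiseDisjoint id) := by
  have hsR : (2 : ℝ) ≤ s := by exact_mod_cast hs
  obtain ⟨e0, he0⟩ : ∃ e0, e0 = (s + 1).choose 2 - 1 := ⟨_, rfl⟩
  have he1 : 1 ≤ e0 := by
    have a := two_choose (s + 1)
    rw [Nat.add_sub_cancel] at a
    have : 3 * 2 ≤ (s + 1) * s := Nat.mul_le_mul (by omega) hs
    omega
  obtain ⟨C, hC⟩ : ∃ C : ℝ, C = 32 * 4 ^ (s - 1) * ((s - 1).factorial : ℝ) := ⟨_, rfl⟩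
  have hC1 : 1 ≤ C := by
    have a : (1 : ℝ) ≤ 4 ^ (s - 1) := one_le_pow₀ (by norm_num)
    have b : (1 : ℝ) ≤ (s - 1).factorial := by exact_mod_cast (s - 1).factorial_pos
    rw [hC]
    nlinarith
  have hC0 : 0 < C := by linarith
  obtain ⟨c0, hc0⟩ : ∃ c0 : ℝ, c0 = C ^ e0 := ⟨_, rfl⟩
  have hc1 : 1 ≤ c0 := by rw [hc0]; exact one_le_pow₀ hC1
  have hCc : C ≤ c0 := by rw [hc0]; exact le_self_pow₀ hC1 (by omega)
  obtain ⟨η, hη⟩ : ∃ η : ℝ, η = 1 / (8 * 2 ^ (s + 1) * (s + 1) * c0) := ⟨_, rfl⟩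
  have hc00 : 0 < c0 := by linarith
  have hη0 : 0 < η := by rw [hη]; positivity
  have hη8 : 2 ^ (s + 1) * ((s + 1) * η * c0) = 1 / 8 := by
    rw [hη]; field_simp
  obtain ⟨β, hβ⟩ : ∃ β : ℝ, β = η / (2 * (s + 2)) := ⟨_, rfl⟩
  have hβ0 : 0 < β := by rw [hβ]; positivity
  have hβη : (s + 2) * β = η / 2 := by rw [hβ]; field_simp
  have hβη' : β ≤ η := by nlinarith
  have hβ8 : 2 ^ (s + 1) * (β * c0) ≤ 1 / 8 := by
    rw [← hη8]
    have : β * c0 ≤ (s + 1) * η * c0 := by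
      have : β ≤ (s + 1) * η := by nlinarith
      gcongr
    gcongr
  have hβ4 : β ≤ 1 / 4 := by
    have a : (1 : ℝ) ≤ 2 ^ (s + 1) := one_le_pow₀ (by norm_num)
    have b : β ≤ β * c0 := le_mul_of_one_le_right hβ0.le hc1
    have c : β * c0 ≤ 2 ^ (s + 1) * (β * c0) := le_mul_of_one_le_left (by positivity) a
    linarith
  refine ⟨β, C, hβ0, hC0, ?_⟩
  intro δ hδ
  obtain ⟨g0, hg0⟩ := exists_nat_gt (4 * ((s + 1).choose 2 : ℝ) / δ)
  have hK0 : (0 : ℝ) < ((s + 1).choose 2 : ℝ) := by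
    exact_mod_cast Nat.choose_pos (by omega : 2 ≤ s + 1)
  have hg00 : 0 < g0 := by
    have : (0 : ℝ) < g0 := lt_of_le_of_lt (by positivity) hg0
    exact_mod_cast this
  have hg01 : 4 * ((s + 1).choose 2 : ℝ) ≤ δ * g0 := by
    rw [div_lt_iff₀ hδ] at hg0
    linarith
  obtain ⟨m, hm⟩ : ∃ m : ℝ, m = 1 + 4 * (s.factorial : ℝ) / (η / 4) ^ s +
    4 * g0 * ((s + 1).factorial : ℝ) * 4 ^ (s + 1) := ⟨_, rfl⟩
  have m1 : (0 : ℝ) ≤ 4 * (s.factorial : ℝ) / (η / 4) ^ s := by positivity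
  have m2 : (0 : ℝ) ≤ 4 * (g0 : ℝ) * ((s + 1).factorial : ℝ) * 4 ^ (s + 1) := by positivity
  have E1 : ∀ᶠ n : ℕ in Filter.atTop, C * pThr s n ≤ 1 := by
    have := (asym0 hs).const_mul C
    rw [mul_zero] at this
    exact (this.eventually_lt_const (by norm_num : (0 : ℝ) < 1)).mono fun _ h => h.le
  have E2 : ∀ᶠ n : ℕ in Filter.atTop, m ^ 2 ≤ (n : ℝ) ^ 2 * (C * pThr s n) ^ s := by
    filter_upwards [(asym1 hs).eventually_ge_atTop (m ^ 2)] with n h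
    refine h.trans ?_
    have : pThr s n ≤ C * pThr s n := le_mul_of_one_le_left (pThr_nonneg s n) hC1
    have h0 := pThr_nonneg s n
    gcongr
  have E3 : ∀ᶠ n : ℕ in Filter.atTop,
      (n : ℝ) ^ 2 * (C * pThr s n) ^ (s + 1) ≤ (1 / (2 * 2 ^ (s + 1))) ^ 2 := by
    have := (asym2 hs).const_mul (C ^ (s + 1))
    rw [mul_zero] at this
    filter_upwards [this.eventually_lt_const
      (by positivity : (0 : ℝ) < (1 / (2 * 2 ^ (s + 1))) ^ 2)] with n h
    rw [mul_pow]
    linarith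
  have E4 : ∀ᶠ n : ℕ in Filter.atTop,
      2 ^ (s + 1) * (((s + 1).choose 2) * (c0 * (C * (n : ℝ) ^ (-phi s)))) ≤ 1 / 4 := by
    have := (tendsto_nat_rpow_neg (phi_pos hs)).const_mul
      (2 ^ (s + 1) * (((s + 1).choose 2 : ℝ) * (c0 * C)))
    rw [mul_zero] at this
    filter_upwards [this.eventually_lt_const (by norm_num : (0 : ℝ) < 1 / 4)] with n h
    linarith
  have E5 : ∀ᶠ n : ℕ in Filter.atTop, Real.exp (-(n : ℝ)) ≤ δ / 2 := by
    have := (Real.tendsto_exp_neg_atTop_nhds_zero).comp (tendsto_natCast_atTop_atTop (R := ℝ))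
    exact (this.eventually_lt_const (by positivity : (0 : ℝ) < δ / 2)).mono fun _ h => h.le
  have E6 : ∀ᶠ n : ℕ in Filter.atTop, (s : ℝ) ≤ η / 4 * n := by
    have : Filter.Tendsto (fun n : ℕ => η / 4 * (n : ℝ)) Filter.atTop Filter.atTop :=
      (tendsto_natCast_atTop_atTop (R := ℝ)).const_mul_atTop (by positivity)
    exact this.eventually_ge_atTop _
  have hev : ∀ᶠ n : ℕ in Filter.atTop, ∀ g : ℕ, (g : ℝ) ≤ β * n →
          ∀ G : SimpleGraph (Fin n), (∀ v, g ≤ degR G v) →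
            1 - δ ≤ Pr n (C * pThr s n)
              (fun H => ∃ 𝒞 : Finset (Finset (Fin n)), 𝒞.card = g ∧
                (∀ c ∈ 𝒞, (G ⊔ H).IsNClique (s + 1) c) ∧
                (𝒞 : Set (Finset (Fin n))).PairwiseDisjoint id) := by
    filter_upwards [E1, E2, E3, E4, E5, E6, Filter.eventually_ge_atTop (4 * s)] with n h1 h2 h3 h4 h5
      h6 h7 g hg G hG
    have hn0 : 0 < n := by omega
    have hnR : (4 : ℝ) * s ≤ n := by exact_mod_cast h7
    have hp0 : 0 ≤ C * pThr s n := mul_nonneg hC0.le (pThr_nonneg s n)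
    have hq0 : 0 ≤ C * (n : ℝ) ^ (-phi s) := by positivity
    have hqp : C * (n : ℝ) ^ (-phi s) ≤ C * pThr s n :=
      mul_le_mul_of_nonneg_left (le_pThr (by omega)) hC0.le
    have hqe : (n : ℝ) ^ s * (C * (n : ℝ) ^ (-phi s)) ^ e0 = c0 := by
      have a := nat_rpow_mul hn0 (phi s) s e0
      rw [he0, phi_e hs, sub_self, Real.rpow_zero, ← he0] at a
      rw [mul_pow, hc0]
      linear_combination C ^ e0 * a
    have hfl := Nat.lt_floor_add_one (η / 2 * (n : ℝ))
    refine main_case (w := ⌊η / 2 * (n : ℝ)⌋₊) (g0 := g0) (c0 := c0) (η := η) (β := β) hs (by omega)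
      hp0 h1 hq0 hqp hδ hβ0.le hβ4 hη0.le h3 ?_ h5 ?_ hβη.le hg00 hg01 ?_ ?_ hc1 ?_ ?_ ?_ hg G hG
    · exact dense_num hs (m := m) hp0 hη0 (by linarith) (by linarith) h2 (by linarith)
    · exact Nat.floor_le (by positivity)
    · intro u hu
      have hu' : (n : ℝ) ≤ 2 * u := by exact_mod_cast hu
      exact rand_num (m := m) hp0 (by linarith) (by linarith) h2 (by linarith)
    · intro u hu
      rw [← he0]
      exact edge_num hs hq0 (by rw [hqe, ← hC]; exact hCc) h7 hu
    · rw [← he0, hqe]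
    · intro t ht hts
      rcases Nat.lt_or_ge t 2 with h | h
      · have : t = 1 := by omega
        subst this
        norm_num
      · have hb : 1 ≤ (n : ℝ) ^ 2 * (C * (n : ℝ) ^ (-phi s)) ^ t := by
          have hbs : 1 ≤ (n : ℝ) ^ 2 * (C * (n : ℝ) ^ (-phi s)) ^ s := by
            rw [mul_pow]
            have a := nat_rpow_mul hn0 (phi s) 2 s
            have b : 1 ≤ (n : ℝ) ^ (((2 : ℕ) : ℝ) - phi s * s) := by
              apply Real.one_le_rpow
              · exact_mod_cast hn0
              · have := phi_s hs
                push_cast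
                linarith
            rw [← a] at b
            have c : (1 : ℝ) ≤ C ^ s := one_le_pow₀ hC1
            have d := mul_le_mul c b zero_le_one (by positivity)
            calc (1 : ℝ) = 1 * 1 := by norm_num
              _ ≤ _ := d
              _ = _ := by ring
          refine hbs.trans ?_
          gcongr (n : ℝ) ^ 2 * ?_
          exact pow_le_pow_of_le_one hq0 (hqp.trans h1) hts
        exact pow_large hq0 le_rfl (by omega) (by simpa using hb) (two_choose t)
    · rw [mul_add, mul_add, hη8]
      linarith
  obtain ⟨n₀, hn₀⟩ := Filter.eventually_atTop.1 hev
  exact ⟨n₀, hn₀⟩
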